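/- The eigenfunction expansion of F converges to F on the whole closed interval [a,b] — that is, the symmetric partial sums S_N(x) = ∑_{n=−N}^{N} C_n (f_n(x), g_n(x)) converge to (F₁(x), F₂(x)) for every x ∈ [a,b] — if and only if F satisfies the same boundary conditions as the basis functions: F₁(a)cos α + F₂(a)sin α = 0 and F₁(b)cos β + F₂(b)sin β = 0. -/

import Mathlib

/-- The pair `(f,g)`, continuously differentiable on `[a,b]`, satisfies the
Dirac-type system with parameter `lam`:
`-g' + t g + (p - lam ρ) f = 0` and `f' + t f + (q - lam ρ) g = 0` on `[a,b]`. -/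
def SatisfiesDiracSystem (a b : ℝ) (p q t ρ : ℝ → ℝ) (lam : ℝ) (f g : ℝ → ℝ) : Prop :=
  ∃ f' g' : ℝ → ℝ,
    (∀ x ∈ Set.Icc a b, HasDerivWithinAt f (f' x) (Set.Icc a b) x) ∧
    (∀ x ∈ Set.Icc a b, HasDerivWithinAt g (g' x) (Set.Icc a b) x) ∧
    ContinuousOn f' (Set.Icc a b) ∧ ContinuousOn g' (Set.Icc a b) ∧
    (∀ x ∈ Set.Icc a b, -g' x + t x * g x + (p x - lam * ρ x) * f x = 0) ∧
    (∀ x ∈ Set.Icc a b, f' x + t x * f x + (q x - lam * ρ x) * g x = 0)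

/-- The separated boundary conditions
`f(a) cos α + g(a) sin α = 0` and `f(b) cos β + g(b) sin β = 0`. -/
def DiracBC (a b α β : ℝ) (f g : ℝ → ℝ) : Prop :=
  f a * Real.cos α + g a * Real.sin α = 0 ∧
  f b * Real.cos β + g b * Real.sin β = 0

/-- `lam` is an eigenvalue of the Dirac-type boundary-value problem. -/
def IsDiracEigenvalue (a b : ℝ) (p q t ρ : ℝ → ℝ) (α β lam : ℝ) : Prop :=
  ∃ f g : ℝ → ℝ,
    SatisfiesDiracSystem a b p q t ρ lam f g ∧
    (∃ x ∈ Set.Icc a b, (f x ≠ 0 ∨ g x ≠ 0)) ∧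
    DiracBC a b α β f g

section DxHelpers
open Filter Topology


theorem dx_no_eig {X : Type*} [NormedAddCommGroup X] [InnerProductSpace ℝ X] (R : X →L[ℝ] X)
    (V : Submodule ℝ X) (hV : IsClosed (V : Set X)) (hRV : ∀ h ∈ V, R h ∈ V)
    (hsymm : ∀ h k, inner ℝ (R h) k = inner ℝ h (R k))
    (hcomp : ∀ h : ℕ → X, (∀ n, ‖h n‖ ≤ 1) → ∃ (y : X) (φ : ℕ → ℕ), StrictMono φ ∧
      Tendsto (fun n => R (h (φ n))) atTop (𝓝 y))
    (hno : ∀ (s : ℝ) (w : X), s ≠ 0 → w ∈ V → R w = s • w → w = 0) :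
    ∀ h ∈ V, R h = 0 := by
  set S : Set ℝ := {c | ∃ h ∈ V, ‖h‖ ≤ 1 ∧ c = ‖R h‖} with hS
  have hSb : BddAbove S := by
    refine ⟨‖R‖, ?_⟩
    rintro c ⟨h, _, h1, rfl⟩
    exact (R.le_opNorm h).trans (by nlinarith [norm_nonneg R])
  have hSn : S.Nonempty := ⟨0, 0, V.zero_mem, by simp, by simp⟩
  set r := sSup S with hr
  have hr0 : 0 ≤ r := le_csSup hSb ⟨0, V.zero_mem, by simp, by simp⟩
  have hle : ∀ h ∈ V, ‖R h‖ ≤ r * ‖h‖ := by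
    intro h hh
    rcases eq_or_ne h 0 with rfl | h0
    · simp
    have hp : 0 < ‖h‖ := norm_pos_iff.mpr h0
    have : ‖R (‖h‖⁻¹ • h)‖ ≤ r := le_csSup hSb ⟨‖h‖⁻¹ • h, V.smul_mem _ hh, by
      rw [norm_smul, norm_inv, norm_norm, inv_mul_cancel₀ hp.ne'], rfl⟩
    rw [map_smul, norm_smul, norm_inv, norm_norm] at this
    rw [inv_mul_le_iff₀ hp] at this
    linarith
  rcases hr0.eq_or_lt with h0 | hpos
  · intro h hh
    have := hle h hh
    rw [← h0, zero_mul] at this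
    exact norm_le_zero_iff.mp this
  exfalso
  obtain ⟨c, -, hc, hcS⟩ := exists_seq_tendsto_sSup hSn hSb
  choose h hhV hh1 hhc using hcS
  obtain ⟨y, φ, hφ, hy⟩ := hcomp h hh1
  have hyV : y ∈ V := hV.mem_of_tendsto hy (Eventually.of_forall fun n => hRV _ (hhV _))
  have hn : Tendsto (fun n => ‖R (h (φ n))‖) atTop (𝓝 r) := by
    have := hc.comp hφ.tendsto_atTop
    refine this.congr fun n => ?_
    simp [hhc]
  have hyn : ‖y‖ = r := tendsto_nhds_unique hy.norm hn
  have hy0 : y ≠ 0 := by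
    intro h; rw [h, norm_zero] at hyn; exact hpos.ne hyn
  -- R R h - r^2 h -> 0
  have key : ∀ n, ‖R (R (h n)) - (r^2) • h n‖^2 ≤ 2 * r^4 - 2 * r^2 * ‖R (h n)‖^2 := by
    intro n
    rw [norm_sub_sq_real, inner_smul_right, hsymm (R (h n)) (h n), real_inner_self_eq_norm_sq, norm_smul]
    have h1 : ‖R (R (h n))‖ ≤ r * ‖R (h n)‖ := hle _ (hRV _ (hhV n))
    have h2 : ‖R (h n)‖ ≤ r * ‖h n‖ := hle _ (hhV n)
    have h3 : ‖R (h n)‖ ≤ r := h2.trans (by nlinarith [hh1 n])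
    have h4 : ‖R (R (h n))‖ ≤ r^2 := h1.trans (by nlinarith)
    have h5 : ‖R (R (h n))‖^2 ≤ (r^2)^2 := by gcongr
    have h6 : ‖h n‖^2 ≤ 1 := by nlinarith [hh1 n, norm_nonneg (h n)]
    have h7 : (‖r^2‖ * ‖h n‖)^2 ≤ r^4 := by
      rw [mul_pow, Real.norm_eq_abs, sq_abs]
      nlinarith [pow_nonneg hr0 4]
    nlinarith
  have hz : Tendsto (fun n => R (R (h (φ n))) - (r^2) • h (φ n)) atTop (𝓝 0) := by
    rw [tendsto_zero_iff_norm_tendsto_zero]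
    have h2 : Tendsto (fun n => ‖R (R (h (φ n))) - (r^2) • h (φ n)‖^2) atTop (𝓝 0) := by
      refine squeeze_zero (fun n => sq_nonneg _) (fun n => key (φ n)) ?_
      have := ((hn.pow 2).const_mul (2 * r^2)).const_sub (2 * r^4)
      convert this using 2
      ring
    have := h2.sqrt
    simpa [Real.sqrt_sq] using this
  have hz2 := (R.continuous.tendsto _).comp hz
  have hRR : Tendsto (fun n => R (R (R (h (φ n)))) - (r^2) • R (h (φ n))) atTop
      (𝓝 (R (R y) - (r^2) • y)) := by
    refine Tendsto.sub ?_ (hy.const_smul _)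
    exact ((R.continuous.comp R.continuous).tendsto y).comp hy
  have hfin : R (R y) - (r^2) • y = 0 := by
    refine tendsto_nhds_unique hRR ?_
    convert hz2 using 2
    · simp
    · simp
  have hw : R y + r • y = 0 := by
    refine hno r _ hpos.ne' (V.add_mem (hRV _ hyV) (V.smul_mem _ hyV)) ?_
    rw [map_add, map_smul, sub_eq_zero.mp hfin, smul_add, smul_smul, pow_two, add_comm]
  have : R y = (-r) • y := by
    rw [neg_smul]; exact eq_neg_of_add_eq_zero_left hw
  exact hy0 (hno (-r) y (neg_ne_zero.mpr hpos.ne') hyV this)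

theorem dx_abstract {X : Type*} [NormedAddCommGroup X] [InnerProductSpace ℝ X] (R : X →L[ℝ] X)
    {ι : Type*} (ev : ι → X → ℝ) (hev0 : ∀ i, ev i 0 = 0)
    (hsymm : ∀ h k, inner ℝ (R h) k = inner ℝ h (R k))
    (hcomp : ∀ h : ℕ → X, (∃ M, ∀ n, ‖h n‖ ≤ M) → ∃ (y : X) (φ : ℕ → ℕ), StrictMono φ ∧
      Tendsto (fun n => R (h (φ n))) atTop (𝓝 y) ∧
      ∀ i, Tendsto (fun n => ev i (R (h (φ n)))) atTop (𝓝 (ev i y)))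
    (e : ℤ → X) (he : Orthonormal ℝ e) (μ : ℤ → ℝ) (heR : ∀ n, R (e n) = μ n • e n)
    (hno : ∀ (s : ℝ) (w : X), s ≠ 0 → (∀ n, inner ℝ (e n) w = 0) → R w = s • w → w = 0)
    (h : X) (i : ι) :
    Tendsto (fun N : ℕ => ev i (R (h - ∑ n ∈ Finset.Icc (-(N:ℤ)) N, (inner ℝ (e n) h) • e n)))
      atTop (𝓝 0) := by
  let V : Submodule ℝ X :=
    { carrier := {w | ∀ n, inner ℝ (e n) w = 0}
      add_mem' := by
        intro x y hx hy n
        rw [inner_add_right, hx n, hy n, add_zero]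
      zero_mem' := by intro n; simp
      smul_mem' := by
        intro c x hx n
        rw [inner_smul_right, hx n, mul_zero] }
  have hVdef : ∀ w, w ∈ V ↔ ∀ n, inner ℝ (e n) w = 0 := fun w => Iff.rfl
  have hV : IsClosed (V : Set X) := by
    have : (V : Set X) = ⋂ n, {w | inner ℝ (e n) w = 0} := by ext w; simp [hVdef]
    rw [this]
    exact isClosed_iInter fun n => isClosed_eq (by fun_prop) continuous_const
  have hRV : ∀ h ∈ V, R h ∈ V := by
    intro w hw n
    rw [← hsymm, heR, inner_smul_left, hw n, mul_zero]
  have hzero := dx_no_eig R V hV hRV hsymm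
    (fun h hh => by
      obtain ⟨y, φ, h1, h2, -⟩ := hcomp h ⟨1, hh⟩
      exact ⟨y, φ, h1, h2⟩) (fun s w hs hw hR => hno s w hs hw hR)
  set k : ℕ → X := fun N => h - ∑ n ∈ Finset.Icc (-(N:ℤ)) N, (inner ℝ (e n) h) • e n with hk
  have hko : ∀ (n : ℤ) (N : ℕ), n.natAbs ≤ N → inner ℝ (e n) (k N) = 0 := by
    intro n N hn
    rw [hk]
    simp only
    rw [inner_sub_right, he.inner_right_sum _ (by rw [Finset.mem_Icc]; omega), sub_self]
  have hkb : ∀ N, ‖k N‖ ≤ ‖h‖ := by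
    intro N
    set P := ∑ n ∈ Finset.Icc (-(N:ℤ)) N, (inner ℝ (e n) h) • e n with hP
    have hperp : inner ℝ (k N) P = 0 := by
      rw [hP, inner_sum]
      refine Finset.sum_eq_zero fun n hn => ?_
      rw [inner_smul_right, real_inner_comm (e n) (k N), hko n N (by rw [Finset.mem_Icc] at hn; omega), mul_zero]
    have h1 : h = k N + P := by simp [hk, hP]
    have h2 : ‖h‖^2 = ‖k N‖^2 + ‖P‖^2 := by
      conv_lhs => rw [h1]
      rw [norm_add_sq_real, hperp]; ring
    nlinarith [norm_nonneg h, norm_nonneg (k N), sq_nonneg ‖P‖]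
  refine tendsto_of_subseq_tendsto fun ns hns => ?_
  obtain ⟨y, φ, hφ, hy, hyev⟩ := hcomp (fun j => k (ns j)) ⟨‖h‖, fun n => hkb _⟩
  refine ⟨φ, ?_⟩
  have hnsφ : Tendsto (fun j => ns (φ j)) atTop atTop := hns.comp hφ.tendsto_atTop
  have hyV : y ∈ V := by
    intro n
    have h1 : Tendsto (fun j => inner ℝ (e n) (R (k (ns (φ j))))) atTop (𝓝 (inner ℝ (e n) y)) :=
      tendsto_const_nhds.inner hy
    refine tendsto_nhds_unique h1 (tendsto_const_nhds.congr' ?_)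
    filter_upwards [hnsφ.eventually_ge_atTop n.natAbs] with j hj
    rw [← hsymm, heR, inner_smul_left, hko n _ hj, mul_zero]
  have hRy := hzero y hyV
  have hy0 : y = 0 := by
    have h1 : Tendsto (fun j => inner ℝ (R (k (ns (φ j)))) y) atTop (𝓝 (inner ℝ y y)) :=
      hy.inner tendsto_const_nhds
    have h2 : inner ℝ y y = 0 := by
      refine tendsto_nhds_unique h1 (tendsto_const_nhds.congr fun j => ?_)
      rw [hsymm, hRy, inner_zero_right]
    exact inner_self_eq_zero.mp h2
  have := hyev i
  rw [hy0, hev0] at this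
  exact this


/-- `L y = k` on `[a,b]`. -/
def DxL (a b : ℝ) (p q t y₁ y₂ k₁ k₂ : ℝ → ℝ) : Prop :=
  (∀ x ∈ Set.Icc a b, HasDerivWithinAt y₁ (k₂ x - t x * y₁ x - q x * y₂ x) (Set.Icc a b) x) ∧
  (∀ x ∈ Set.Icc a b, HasDerivWithinAt y₂ (t x * y₂ x + p x * y₁ x - k₁ x) (Set.Icc a b) x)

theorem dx_clamp_lip (r x y : ℝ) : |max (-r) (min r x) - max (-r) (min r y)| ≤ |x - y| := by
  refine (abs_max_sub_max_le_max _ _ _ _).trans ?_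
  rw [sub_self, abs_zero, max_eq_right (abs_nonneg _)]
  refine (abs_min_sub_min_le_max _ _ _ _).trans ?_
  rw [sub_self, abs_zero, max_eq_right (abs_nonneg _)]

theorem dx_clamp_le (r x : ℝ) (hr : 0 ≤ r) : |max (-r) (min r x)| ≤ |x| := by
  have := dx_clamp_lip r x 0
  simpa [hr] using this

theorem dx_clamp_le' (r x : ℝ) (hr : 0 ≤ r) : |max (-r) (min r x)| ≤ r := by
  rw [abs_le]
  exact ⟨le_max_left _ _, max_le (by linarith) (min_le_left _ _)⟩

theorem dx_clamp_eq (r x : ℝ) (hx : |x| ≤ r) : max (-r) (min r x) = x := by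
  rw [abs_le] at hx
  rw [min_eq_right hx.2, max_eq_right hx.1]

theorem dx_two_bound {M A B c d n : ℝ} (hA : |A| ≤ M) (hB : |B| ≤ M) (hM : 0 ≤ M)
    (hc : |c| ≤ n) (hd : |d| ≤ n) : |A * c + B * d| ≤ 2 * M * n := by
  refine (abs_add_le _ _).trans ?_
  rw [abs_mul, abs_mul]
  have h1 := mul_le_mul hA hc (abs_nonneg _) hM
  have h2 := mul_le_mul hB hd (abs_nonneg _) hM
  linarith

theorem dx_exists_bound {a b : ℝ} {p q t : ℝ → ℝ} (hp : ContinuousOn p (Set.Icc a b))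
    (hq : ContinuousOn q (Set.Icc a b)) (ht : ContinuousOn t (Set.Icc a b)) :
    ∃ M : ℝ, 0 ≤ M ∧ ∀ x ∈ Set.Icc a b, |p x| ≤ M ∧ |q x| ≤ M ∧ |t x| ≤ M := by
  obtain ⟨M1, h1⟩ := isCompact_Icc.exists_bound_of_continuousOn hp
  obtain ⟨M2, h2⟩ := isCompact_Icc.exists_bound_of_continuousOn hq
  obtain ⟨M3, h3⟩ := isCompact_Icc.exists_bound_of_continuousOn ht
  refine ⟨|M1| + |M2| + |M3|, by positivity, fun x hx => ⟨?_, ?_, ?_⟩⟩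
  · have := h1 x hx; rw [Real.norm_eq_abs] at this
    linarith [le_abs_self M1, abs_nonneg M2, abs_nonneg M3]
  · have := h2 x hx; rw [Real.norm_eq_abs] at this
    linarith [le_abs_self M2, abs_nonneg M1, abs_nonneg M3]
  · have := h3 x hx; rw [Real.norm_eq_abs] at this
    linarith [le_abs_self M3, abs_nonneg M2, abs_nonneg M1]

theorem dx_exists_sol {a b : ℝ} (hab : a < b) {p q t : ℝ → ℝ} (hp : ContinuousOn p (Set.Icc a b))
    (hq : ContinuousOn q (Set.Icc a b)) (ht : ContinuousOn t (Set.Icc a b)) (c₁ c₂ : ℝ) :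
    ∃ y₁ y₂ : ℝ → ℝ, y₁ a = c₁ ∧ y₂ a = c₂ ∧ DxL a b p q t y₁ y₂ (fun _ => 0) (fun _ => 0) := by
  obtain ⟨M, hM, hMb⟩ := dx_exists_bound hp hq ht
  set r : ℝ := ‖(c₁, c₂)‖ * Real.exp (2 * M * (b - a)) with hr
  have hr0 : 0 ≤ r := by positivity
  let cl : ℝ → ℝ := fun x => max (-r) (min r x)
  let F : ℝ → ℝ × ℝ → ℝ × ℝ := fun s x =>
    (-t s * cl x.1 + -q s * cl x.2, t s * cl x.2 + p s * cl x.1)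
  have hFb : ∀ s ∈ Set.Icc a b, ∀ x n, |cl x.1| ≤ n → |cl x.2| ≤ n → ‖F s x‖ ≤ 2 * M * n := by
    intro s hs x n h1 h2
    obtain ⟨hp', hq', ht'⟩ := hMb s hs
    rw [Prod.norm_def]
    refine max_le ?_ ?_
    · rw [Real.norm_eq_abs]
      exact dx_two_bound (by rwa [abs_neg]) (by rwa [abs_neg]) hM h1 h2
    · rw [Real.norm_eq_abs]
      exact dx_two_bound ht' hp' hM h2 h1
  have hPL : IsPicardLindelof F (⟨a, Set.left_mem_Icc.mpr hab.le⟩ : Set.Icc a b) (c₁, c₂)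
      (⟨2 * M * r * (b - a), by have := sub_pos.mpr hab; positivity⟩) 0
      ⟨2 * M * r, by positivity⟩ ⟨2 * M, by positivity⟩ := by
    constructor
    · intro s hs
      refine LipschitzWith.lipschitzOnWith ?_
      refine LipschitzWith.of_dist_le_mul fun x y => ?_
      obtain ⟨hp', hq', ht'⟩ := hMb s hs
      have h1 : |cl x.1 - cl y.1| ≤ dist x y := (dx_clamp_lip _ _ _).trans
        (by rw [Prod.dist_eq, ← Real.dist_eq]; exact le_max_left _ _)
      have h2 : |cl x.2 - cl y.2| ≤ dist x y := (dx_clamp_lip _ _ _).trans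
        (by rw [Prod.dist_eq, ← Real.dist_eq]; exact le_max_right _ _)
      rw [Prod.dist_eq]
      refine max_le ?_ ?_
      · have := dx_two_bound (A := -t s) (B := -q s) (by rwa [abs_neg]) (by rwa [abs_neg]) hM h1 h2
        rw [Real.dist_eq]
        refine le_trans (le_of_eq ?_) this
        congr 1
        simp only [F]; ring
      · have := dx_two_bound ht' hp' hM h2 h1
        rw [Real.dist_eq]
        refine le_trans (le_of_eq ?_) this
        congr 1
        simp only [F]; ring
    · intro x _
      simp only [F]
      fun_prop
    · intro s hs x _
      exact hFb s hs x r (dx_clamp_le' _ _ hr0) (dx_clamp_le' _ _ hr0)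
    · have : max (b - a) (a - a) = b - a := max_eq_left (by linarith)
      change 2 * M * r * max (b - a) (a - a) ≤ 2 * M * r * (b - a) - 0
      rw [this]; linarith
  obtain ⟨y, hy0, hy⟩ := hPL.exists_eq_forall_mem_Icc_hasDerivWithinAt₀
  have hy0 : y a = (c₁, c₂) := hy0
  have hyc : ContinuousOn y (Set.Icc a b) := fun x hx => (hy x hx).continuousWithinAt
  have hgr := norm_le_gronwallBound_of_norm_deriv_right_le (f := y) (f' := fun s => F s (y s))
    (δ := ‖(c₁, c₂)‖) (K := 2 * M) (ε := 0) hyc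
    (fun x hx => (hy x (Set.Ico_subset_Icc_self hx)).mono_of_mem_nhdsWithin
      (mem_nhdsGE_iff_exists_Icc_subset.mpr ⟨b, hx.2, Set.Icc_subset_Icc_left hx.1⟩))
    (by rw [hy0])
    (fun x hx => by
      rw [add_zero]
      refine hFb x (Set.Ico_subset_Icc_self hx) _ _ ((dx_clamp_le _ _ hr0).trans ?_)
        ((dx_clamp_le _ _ hr0).trans ?_)
      · rw [← Real.norm_eq_abs]; exact norm_fst_le _
      · rw [← Real.norm_eq_abs]; exact norm_snd_le _)
  have hyr : ∀ x ∈ Set.Icc a b, ‖y x‖ ≤ r := by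
    intro x hx
    refine (hgr x hx).trans ?_
    rw [gronwallBound_ε0, hr]
    gcongr
    exact hx.2
  have e1 : ∀ x ∈ Set.Icc a b, cl (y x).1 = (y x).1 := fun x hx => dx_clamp_eq _ _ (by
    rw [← Real.norm_eq_abs]; exact (norm_fst_le _).trans (hyr x hx))
  have e2 : ∀ x ∈ Set.Icc a b, cl (y x).2 = (y x).2 := fun x hx => dx_clamp_eq _ _ (by
    rw [← Real.norm_eq_abs]; exact (norm_snd_le _).trans (hyr x hx))
  refine ⟨fun x => (y x).1, fun x => (y x).2, by simp [hy0], by simp [hy0], ?_, ?_⟩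
  · intro x hx
    have : HasDerivWithinAt (fun x => (y x).1) (F x (y x)).1 (Set.Icc a b) x := by
      have := (hy x hx).hasFDerivWithinAt.fst.hasDerivWithinAt
      simpa using this
    convert this using 1
    simp only [F]
    rw [e1 x hx, e2 x hx]; ring
  · intro x hx
    have : HasDerivWithinAt (fun x => (y x).2) (F x (y x)).2 (Set.Icc a b) x := by
      have := (hy x hx).hasFDerivWithinAt.snd.hasDerivWithinAt
      simpa using this
    convert this using 1
    simp only [F]
    rw [e1 x hx, e2 x hx]; ring

theorem dx_unique {a b : ℝ} {p q t : ℝ → ℝ} (hp : ContinuousOn p (Set.Icc a b))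
    (hq : ContinuousOn q (Set.Icc a b)) (ht : ContinuousOn t (Set.Icc a b)) {y₁ y₂ : ℝ → ℝ}
    (hy : DxL a b p q t y₁ y₂ (fun _ => 0) (fun _ => 0)) (h1 : y₁ a = 0) (h2 : y₂ a = 0) :
    ∀ x ∈ Set.Icc a b, y₁ x = 0 ∧ y₂ x = 0 := by
  obtain ⟨M, hM, hMb⟩ := dx_exists_bound hp hq ht
  have hd : ∀ x ∈ Set.Icc a b, HasDerivWithinAt (fun x => (y₁ x, y₂ x))
      (0 - t x * y₁ x - q x * y₂ x, t x * y₂ x + p x * y₁ x - 0) (Set.Icc a b) x :=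
    fun x hx => (hy.1 x hx).prodMk (hy.2 x hx)
  have := eq_zero_of_abs_deriv_le_mul_abs_self_of_eq_zero_right (f := fun x => (y₁ x, y₂ x))
    (f' := fun x => (0 - t x * y₁ x - q x * y₂ x, t x * y₂ x + p x * y₁ x - 0)) (K := 2 * M)
    (fun x hx => (hd x hx).continuousWithinAt)
    (fun x hx => (hd x (Set.Ico_subset_Icc_self hx)).mono_of_mem_nhdsWithin
      (mem_nhdsGE_iff_exists_Icc_subset.mpr ⟨b, hx.2, Set.Icc_subset_Icc_left hx.1⟩))
    (by simp [h1, h2])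
    (fun x hx => by
      obtain ⟨hp', hq', ht'⟩ := hMb x (Set.Ico_subset_Icc_self hx)
      have n1 : |y₁ x| ≤ ‖(y₁ x, y₂ x)‖ := norm_fst_le (y₁ x, y₂ x)
      have n2 : |y₂ x| ≤ ‖(y₁ x, y₂ x)‖ := norm_snd_le (y₁ x, y₂ x)
      rw [Prod.norm_def]
      refine max_le ?_ ?_
      · have := dx_two_bound (A := -t x) (B := -q x) (by rwa [abs_neg]) (by rwa [abs_neg]) hM n1 n2
        rw [Real.norm_eq_abs]
        refine le_trans (le_of_eq ?_) this
        congr 1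
        ring
      · have := dx_two_bound ht' hp' hM n2 n1
        rw [Real.norm_eq_abs]
        refine le_trans (le_of_eq ?_) this
        congr 1
        ring)
  intro x hx
  have := this x hx
  simpa using this


theorem DxL.congr {a b : ℝ} {p q t y₁ y₂ k₁ k₂ z₁ z₂ l₁ l₂ : ℝ → ℝ}
    (h : DxL a b p q t y₁ y₂ k₁ k₂)
    (hz1 : ∀ x ∈ Set.Icc a b, z₁ x = y₁ x) (hz2 : ∀ x ∈ Set.Icc a b, z₂ x = y₂ x)
    (hl1 : ∀ x ∈ Set.Icc a b, l₁ x = k₁ x) (hl2 : ∀ x ∈ Set.Icc a b, l₂ x = k₂ x) :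
    DxL a b p q t z₁ z₂ l₁ l₂ := by
  refine ⟨fun x hx => ?_, fun x hx => ?_⟩
  · rw [hl2 x hx, hz1 x hx, hz2 x hx]
    exact (h.1 x hx).congr hz1 (hz1 x hx)
  · rw [hl1 x hx, hz1 x hx, hz2 x hx]
    exact (h.2 x hx).congr hz2 (hz2 x hx)

theorem DxL.comb {a b : ℝ} {p q t y₁ y₂ k₁ k₂ z₁ z₂ l₁ l₂ : ℝ → ℝ}
    (h : DxL a b p q t y₁ y₂ k₁ k₂) (h' : DxL a b p q t z₁ z₂ l₁ l₂) (c d : ℝ) :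
    DxL a b p q t (fun x => c * y₁ x + d * z₁ x) (fun x => c * y₂ x + d * z₂ x)
      (fun x => c * k₁ x + d * l₁ x) (fun x => c * k₂ x + d * l₂ x) := by
  refine ⟨fun x hx => ?_, fun x hx => ?_⟩
  · exact (((h.1 x hx).const_mul c).add ((h'.1 x hx).const_mul d)).congr_deriv (by ring)
  · exact (((h.2 x hx).const_mul c).add ((h'.2 x hx).const_mul d)).congr_deriv (by ring)

theorem DxL.cont1 {a b : ℝ} {p q t y₁ y₂ k₁ k₂ : ℝ → ℝ}
    (h : DxL a b p q t y₁ y₂ k₁ k₂) : ContinuousOn y₁ (Set.Icc a b) :=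
  fun x hx => (h.1 x hx).continuousWithinAt

theorem DxL.cont2 {a b : ℝ} {p q t y₁ y₂ k₁ k₂ : ℝ → ℝ}
    (h : DxL a b p q t y₁ y₂ k₁ k₂) : ContinuousOn y₂ (Set.Icc a b) :=
  fun x hx => (h.2 x hx).continuousWithinAt

theorem DxL.wronsk {a b : ℝ} {p q t y₁ y₂ k₁ k₂ z₁ z₂ l₁ l₂ : ℝ → ℝ}
    (h : DxL a b p q t y₁ y₂ k₁ k₂) (h' : DxL a b p q t z₁ z₂ l₁ l₂) :
    ∀ x ∈ Set.Icc a b, HasDerivWithinAt (fun x => y₁ x * z₂ x - y₂ x * z₁ x)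
      (k₁ x * z₁ x + k₂ x * z₂ x - (y₁ x * l₁ x + y₂ x * l₂ x)) (Set.Icc a b) x := by
  intro x hx
  exact (((h.1 x hx).mul (h'.2 x hx)).sub ((h.2 x hx).mul (h'.1 x hx))).congr_deriv (by ring)

theorem dx_ftc {a b c d : ℝ} {y y' : ℝ → ℝ} (hac : a ≤ c) (hcd : c ≤ d) (hdb : d ≤ b)
    (h : ∀ x ∈ Set.Icc a b, HasDerivWithinAt y (y' x) (Set.Icc a b) x)
    (hc : ContinuousOn y' (Set.Icc a b)) : ∫ x in c..d, y' x = y d - y c := by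
  have hsub : Set.Icc c d ⊆ Set.Icc a b := Set.Icc_subset_Icc hac hdb
  refine intervalIntegral.integral_eq_sub_of_hasDerivAt_of_le hcd
    (fun x hx => ((h x (hsub hx)).continuousWithinAt).mono hsub) (fun x hx => ?_) ?_
  · exact (h x (hsub (Set.Ioo_subset_Icc_self hx))).hasDerivAt
      (Icc_mem_nhds (lt_of_le_of_lt hac hx.1) (lt_of_lt_of_le hx.2 hdb))
  · exact ContinuousOn.intervalIntegrable_of_Icc hcd (hc.mono hsub)

theorem dx_bc_det {y₁ y₂ w₁ w₂ θ : ℝ} (h : y₁ * Real.cos θ + y₂ * Real.sin θ = 0)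
    (h' : w₁ * Real.cos θ + w₂ * Real.sin θ = 0) : y₁ * w₂ - y₂ * w₁ = 0 := by
  have h1 := Real.sin_sq_add_cos_sq θ
  linear_combination (-(y₁ * w₂ - y₂ * w₁)) * h1 +
    (w₂ * Real.cos θ - w₁ * Real.sin θ) * h + (y₁ * Real.sin θ - y₂ * Real.cos θ) * h'

theorem dx_lagrange {a b : ℝ} (hab : a < b) {p q t y₁ y₂ k₁ k₂ z₁ z₂ l₁ l₂ : ℝ → ℝ} {α β : ℝ}
    (h : DxL a b p q t y₁ y₂ k₁ k₂) (h' : DxL a b p q t z₁ z₂ l₁ l₂)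
    (hk1 : ContinuousOn k₁ (Set.Icc a b)) (hk2 : ContinuousOn k₂ (Set.Icc a b))
    (hl1 : ContinuousOn l₁ (Set.Icc a b)) (hl2 : ContinuousOn l₂ (Set.Icc a b))
    (hbc : DiracBC a b α β y₁ y₂) (hbc' : DiracBC a b α β z₁ z₂) :
    ∫ x in a..b, (k₁ x * z₁ x + k₂ x * z₂ x) = ∫ x in a..b, (y₁ x * l₁ x + y₂ x * l₂ x) := by
  have c1 := h.cont1
  have c2 := h.cont2
  have c3 := h'.cont1
  have c4 := h'.cont2
  have hi := dx_ftc le_rfl hab.le le_rfl (h.wronsk h') (by fun_prop)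
  rw [dx_bc_det hbc.1 hbc'.1, dx_bc_det hbc.2 hbc'.2, intervalIntegral.integral_sub] at hi
  · linarith
  · exact ContinuousOn.intervalIntegrable_of_Icc hab.le (by fun_prop)
  · exact ContinuousOn.intervalIntegrable_of_Icc hab.le (by fun_prop)

theorem dx_abs_le (δ h : ℝ) (hδ : 0 < δ) : |h| ≤ δ⁻¹ + δ * h^2 := by
  rw [← sq_abs]
  have h0 := abs_nonneg h
  have : 0 < δ⁻¹ := by positivity
  have h1 : δ * δ⁻¹ = 1 := mul_inv_cancel₀ hδ.ne'
  have h2 : |h| = δ⁻¹ * (δ * |h|) := by field_simp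
  nlinarith [sq_nonneg (δ * |h| - 1), mul_nonneg this.le (sq_nonneg (δ * |h| - 1)), mul_nonneg hδ.le (sq_nonneg |h|)]

theorem dx_int_bound {a b c d : ℝ} {ρ h₁ h₂ w : ℝ → ℝ} {M C D δ : ℝ}
    (hρ : ContinuousOn ρ (Set.Icc a b)) (hh1 : ContinuousOn h₁ (Set.Icc a b))
    (hh2 : ContinuousOn h₂ (Set.Icc a b))
    (hρ0 : ∀ x ∈ Set.Icc a b, 0 ≤ ρ x) (hρM : ∀ x ∈ Set.Icc a b, ρ x ≤ M)
    (hD : 0 ≤ D) (hδ : 0 < δ)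
    (hw : ∀ x ∈ Set.Icc a b, |w x| ≤ C + D * (ρ x * (|h₁ x| + |h₂ x|)))
    (hac : a ≤ c) (hcd : c ≤ d) (hdb : d ≤ b) :
    |∫ x in c..d, w x| ≤ (C + 2 * D * M * δ⁻¹) * (d - c) +
      D * δ * ∫ x in a..b, ρ x * (h₁ x ^ 2 + h₂ x ^ 2) := by
  have hsub : Set.Icc c d ⊆ Set.Icc a b := Set.Icc_subset_Icc hac hdb
  have hci : ContinuousOn (fun x => ρ x * (h₁ x ^ 2 + h₂ x ^ 2)) (Set.Icc a b) := by fun_prop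
  have hintg : IntervalIntegrable (fun x => ρ x * (h₁ x ^ 2 + h₂ x ^ 2)) MeasureTheory.volume c d :=
    ContinuousOn.intervalIntegrable_of_Icc hcd (hci.mono hsub)
  have h1 : ‖∫ x in c..d, w x‖ ≤ ∫ x in c..d, ((C + 2 * D * M * δ⁻¹) +
      D * δ * (ρ x * (h₁ x ^ 2 + h₂ x ^ 2))) := by
    refine intervalIntegral.norm_integral_le_of_norm_le hcd (MeasureTheory.ae_of_all _ fun x hx => ?_)
      (by exact (intervalIntegrable_const).add (hintg.const_mul _))
    have hx' := hsub (Set.Ioc_subset_Icc_self hx)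
    rw [Real.norm_eq_abs]
    refine (hw x hx').trans ?_
    have e1 := dx_abs_le δ (h₁ x) hδ
    have e2 := dx_abs_le δ (h₂ x) hδ
    have r0 := hρ0 x hx'
    have rM := hρM x hx'
    have d0 : 0 < δ⁻¹ := by positivity
    calc C + D * (ρ x * (|h₁ x| + |h₂ x|))
        ≤ C + D * (ρ x * ((δ⁻¹ + δ * h₁ x ^ 2) + (δ⁻¹ + δ * h₂ x ^ 2))) := by gcongr
      _ = C + 2 * D * ρ x * δ⁻¹ + D * δ * (ρ x * (h₁ x ^ 2 + h₂ x ^ 2)) := by ring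
      _ ≤ C + 2 * D * M * δ⁻¹ + D * δ * (ρ x * (h₁ x ^ 2 + h₂ x ^ 2)) := by gcongr
  rw [Real.norm_eq_abs] at h1
  refine h1.trans ?_
  rw [intervalIntegral.integral_add intervalIntegrable_const (hintg.const_mul _),
    intervalIntegral.integral_const, intervalIntegral.integral_const_mul, smul_eq_mul, mul_comm (d - c)]
  have : ∫ x in c..d, ρ x * (h₁ x ^ 2 + h₂ x ^ 2) ≤ ∫ x in a..b, ρ x * (h₁ x ^ 2 + h₂ x ^ 2) := by
    refine intervalIntegral.integral_mono_interval hac hcd hdb ?_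
      (ContinuousOn.intervalIntegrable_of_Icc (hac.trans (hcd.trans hdb)) hci)
    refine (MeasureTheory.ae_restrict_mem measurableSet_Ioc).mono fun x hx => ?_
    have := hρ0 x (Set.Ioc_subset_Icc_self hx)
    simp only [Pi.zero_apply]
    positivity
  gcongr

theorem dx_green {a b : ℝ} {p q t ρ u₁ u₂ v₁ v₂ h₁ h₂ : ℝ → ℝ} {W : ℝ} (hW : W ≠ 0)
    (hρ : Continuous ρ) (hu1 : Continuous u₁) (hu2 : Continuous u₂)
    (hv1 : Continuous v₁) (hv2 : Continuous v₂) (hh1 : Continuous h₁) (hh2 : Continuous h₂)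
    (hu : DxL a b p q t u₁ u₂ (fun _ => 0) (fun _ => 0))
    (hv : DxL a b p q t v₁ v₂ (fun _ => 0) (fun _ => 0))
    (hwr : ∀ x ∈ Set.Icc a b, u₁ x * v₂ x - u₂ x * v₁ x = W) :
    DxL a b p q t
      (fun x => -W⁻¹ * (v₁ x * (∫ s in a..x, ρ s * (u₁ s * h₁ s + u₂ s * h₂ s)) +
        u₁ x * (∫ s in x..b, ρ s * (v₁ s * h₁ s + v₂ s * h₂ s))))
      (fun x => -W⁻¹ * (v₂ x * (∫ s in a..x, ρ s * (u₁ s * h₁ s + u₂ s * h₂ s)) +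
        u₂ x * (∫ s in x..b, ρ s * (v₁ s * h₁ s + v₂ s * h₂ s))))
      (fun x => ρ x * h₁ x) (fun x => ρ x * h₂ x) := by
  have hP : ∀ x, HasDerivAt (fun x => ∫ s in a..x, ρ s * (u₁ s * h₁ s + u₂ s * h₂ s))
      (ρ x * (u₁ x * h₁ x + u₂ x * h₂ x)) x := fun x =>
    (by fun_prop : Continuous fun s => ρ s * (u₁ s * h₁ s + u₂ s * h₂ s)).integral_hasStrictDerivAt
      a x |>.hasDerivAt
  have hQ : ∀ x, HasDerivAt (fun x => ∫ s in x..b, ρ s * (v₁ s * h₁ s + v₂ s * h₂ s))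
      (-(ρ x * (v₁ x * h₁ x + v₂ x * h₂ x))) x := fun x =>
    intervalIntegral.integral_hasDerivAt_left
      (Continuous.intervalIntegrable (by fun_prop) _ _)
      (Continuous.stronglyMeasurableAtFilter (by fun_prop) _ _)
      (Continuous.continuousAt (by fun_prop))
  refine ⟨fun x hx => ?_, fun x hx => ?_⟩
  · refine ((((hv.1 x hx).mul (hP x).hasDerivWithinAt).add
      ((hu.1 x hx).mul (hQ x).hasDerivWithinAt)).const_mul (-W⁻¹)).congr_deriv ?_
    have := hwr x hx
    field_simp
    linear_combination (ρ x * h₂ x) * this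
  · refine ((((hv.2 x hx).mul (hP x).hasDerivWithinAt).add
      ((hu.2 x hx).mul (hQ x).hasDerivWithinAt)).const_mul (-W⁻¹)).congr_deriv ?_
    have := hwr x hx
    field_simp
    linear_combination (-ρ x * h₁ x) * this


theorem dx_exists_sol' {a b : ℝ} (hab : a < b) {p q t : ℝ → ℝ} (hp : ContinuousOn p (Set.Icc a b))
    (hq : ContinuousOn q (Set.Icc a b)) (ht : ContinuousOn t (Set.Icc a b)) (c₁ c₂ : ℝ) :
    ∃ y₁ y₂ : ℝ → ℝ, Continuous y₁ ∧ Continuous y₂ ∧ y₁ a = c₁ ∧ y₂ a = c₂ ∧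
      DxL a b p q t y₁ y₂ (fun _ => 0) (fun _ => 0) := by
  obtain ⟨y₁, y₂, h1, h2, h⟩ := dx_exists_sol hab hp hq ht c₁ c₂
  refine ⟨fun x => y₁ (Set.projIcc a b hab.le x), fun x => y₂ (Set.projIcc a b hab.le x),
    ?_, ?_, ?_, ?_, ?_⟩
  · exact (continuousOn_iff_continuous_domRestrict.mp h.cont1).comp continuous_projIcc
  · exact (continuousOn_iff_continuous_domRestrict.mp h.cont2).comp continuous_projIcc
  · simp [h1]
  · simp [h2]
  · exact h.congr (fun x hx => by simp [Set.projIcc_of_mem hab.le hx])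
      (fun x hx => by simp [Set.projIcc_of_mem hab.le hx]) (fun _ _ => rfl) (fun _ _ => rfl)

theorem dx_wronsk_const {a b : ℝ} {p q t u₁ u₂ v₁ v₂ : ℝ → ℝ}
    (hu : DxL a b p q t u₁ u₂ (fun _ => 0) (fun _ => 0))
    (hv : DxL a b p q t v₁ v₂ (fun _ => 0) (fun _ => 0)) :
    ∀ x ∈ Set.Icc a b, u₁ x * v₂ x - u₂ x * v₁ x = u₁ a * v₂ a - u₂ a * v₁ a := by
  intro x hx
  have := dx_ftc (y' := fun _ => 0) le_rfl hx.1 hx.2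
    (fun x hx => (hu.wronsk hv x hx).congr_deriv (by simp)) continuousOn_const
  simp at this
  linarith

theorem dx_resolvent {a b : ℝ} (hab : a < b) {p q t ρ : ℝ → ℝ} (α β : ℝ)
    (hp : ContinuousOn p (Set.Icc a b))
    (hq : ContinuousOn q (Set.Icc a b)) (ht : ContinuousOn t (Set.Icc a b)) (hρ : Continuous ρ)
    (hρ0 : ∀ x ∈ Set.Icc a b, 0 < ρ x)
    (hz : ∀ y₁ y₂ : ℝ → ℝ, DxL a b p q t y₁ y₂ (fun _ => 0) (fun _ => 0) →
      DiracBC a b α β y₁ y₂ → ∀ x ∈ Set.Icc a b, y₁ x = 0 ∧ y₂ x = 0) :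
    ∃ K : ℝ, 0 ≤ K ∧ ∀ h₁ h₂ : ℝ → ℝ, Continuous h₁ → Continuous h₂ → ∃ y₁ y₂ : ℝ → ℝ,
      DxL a b p q t y₁ y₂ (fun x => ρ x * h₁ x) (fun x => ρ x * h₂ x) ∧ DiracBC a b α β y₁ y₂ ∧
      ∀ x ∈ Set.Icc a b,
        |y₁ x| ≤ K * (1 + ∫ x in a..b, ρ x * (h₁ x ^ 2 + h₂ x ^ 2)) ∧
        |y₂ x| ≤ K * (1 + ∫ x in a..b, ρ x * (h₁ x ^ 2 + h₂ x ^ 2)) := by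
  obtain ⟨φ₁, φ₂, cφ1, cφ2, iφ1, iφ2, hφ⟩ := dx_exists_sol' hab hp hq ht 1 0
  obtain ⟨ψ₁, ψ₂, cψ1, cψ2, iψ1, iψ2, hψ⟩ := dx_exists_sol' hab hp hq ht 0 1
  have hone : ∀ x ∈ Set.Icc a b, φ₁ x * ψ₂ x - φ₂ x * ψ₁ x = 1 := by
    intro x hx
    rw [dx_wronsk_const hφ hψ x hx, iφ1, iφ2, iψ1, iψ2]; ring
  set A := φ₁ b * Real.cos β + φ₂ b * Real.sin β with hA
  set B := ψ₁ b * Real.cos β + ψ₂ b * Real.sin β with hB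
  set u₁ : ℝ → ℝ := fun x => Real.sin α * φ₁ x + (-Real.cos α) * ψ₁ x with hu1
  set u₂ : ℝ → ℝ := fun x => Real.sin α * φ₂ x + (-Real.cos α) * ψ₂ x with hu2
  set v₁ : ℝ → ℝ := fun x => B * φ₁ x + (-A) * ψ₁ x with hv1
  set v₂ : ℝ → ℝ := fun x => B * φ₂ x + (-A) * ψ₂ x with hv2
  have cu1 : Continuous u₁ := by fun_prop
  have cu2 : Continuous u₂ := by fun_prop
  have cv1 : Continuous v₁ := by fun_prop
  have cv2 : Continuous v₂ := by fun_prop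
  have hu : DxL a b p q t u₁ u₂ (fun _ => 0) (fun _ => 0) :=
    (hφ.comb hψ (Real.sin α) (-Real.cos α)).congr (fun _ _ => rfl) (fun _ _ => rfl)
      (fun _ _ => by simp) (fun _ _ => by simp)
  have hv : DxL a b p q t v₁ v₂ (fun _ => 0) (fun _ => 0) :=
    (hφ.comb hψ B (-A)).congr (fun _ _ => rfl) (fun _ _ => rfl)
      (fun _ _ => by simp) (fun _ _ => by simp)
  have bu : u₁ a * Real.cos α + u₂ a * Real.sin α = 0 := by
    simp only [hu1, hu2, iφ1, iφ2, iψ1, iψ2]; ring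
  have bv : v₁ b * Real.cos β + v₂ b * Real.sin β = 0 := by
    simp only [hv1, hv2, hA, hB]; ring
  set W : ℝ := Real.cos α * B - Real.sin α * A with hWdef
  have hwr : ∀ x ∈ Set.Icc a b, u₁ x * v₂ x - u₂ x * v₁ x = W := by
    intro x hx
    simp only [hu1, hu2, hv1, hv2, hWdef]
    linear_combination (Real.cos α * B - Real.sin α * A) * hone x hx
  have hW : W ≠ 0 := by
    intro h0
    have hbb : u₁ b * Real.cos β + u₂ b * Real.sin β = 0 := by
      simp only [hu1, hu2]
      linear_combination (-1 : ℝ) * h0 + Real.sin α * (-hA) + Real.cos α * hB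
    obtain ⟨e1, e2⟩ := hz u₁ u₂ hu ⟨bu, hbb⟩ a (Set.left_mem_Icc.mpr hab.le)
    simp only [hu1, hu2, iφ1, iφ2, iψ1, iψ2] at e1 e2
    have := Real.sin_sq_add_cos_sq α
    simp at e1 e2
    rw [e1, e2] at this
    norm_num at this
  obtain ⟨Mu, hMu0, hMu⟩ := dx_exists_bound (a := a) (b := b) cu1.continuousOn cu2.continuousOn
    hρ.continuousOn
  obtain ⟨Mv, hMv0, hMv⟩ := dx_exists_bound (a := a) (b := b) cv1.continuousOn cv2.continuousOn
    hρ.continuousOn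
  set D := Mu + Mv with hD
  have hD0 : 0 ≤ D := by positivity
  have hba : 0 ≤ b - a := by linarith
  set K1 : ℝ := 2 * D * D * (b - a) + D with hK1
  have hK10 : 0 ≤ K1 := by positivity
  refine ⟨|W|⁻¹ * (2 * D * K1), by positivity, ?_⟩
  intro h₁ h₂ ch1 ch2
  set N := ∫ x in a..b, ρ x * (h₁ x ^ 2 + h₂ x ^ 2) with hN
  have hN0 : 0 ≤ N := intervalIntegral.integral_nonneg hab.le fun x hx => by
    have := hρ0 x hx; positivity
  have gen : ∀ g₁ g₂ : ℝ → ℝ, (∀ x ∈ Set.Icc a b, |g₁ x| ≤ D ∧ |g₂ x| ≤ D) →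
      ∀ c d, a ≤ c → c ≤ d → d ≤ b →
      |∫ s in c..d, ρ s * (g₁ s * h₁ s + g₂ s * h₂ s)| ≤ K1 * (1 + N) := by
    intro g₁ g₂ hg c d hac hcd hdb
    have := dx_int_bound (w := fun s => ρ s * (g₁ s * h₁ s + g₂ s * h₂ s)) (M := D) (C := 0) (D := D)
      (δ := 1) hρ.continuousOn
      ch1.continuousOn ch2.continuousOn (fun x hx => (hρ0 x hx).le)
      (fun x hx => by
        have := (hMu x hx).2.2
        linarith [le_abs_self (ρ x)]) hD0 one_pos
      (fun x hx => by
        obtain ⟨g1, g2⟩ := hg x hx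
        rw [abs_mul, abs_of_pos (hρ0 x hx), zero_add]
        have h3 : |g₁ x * h₁ x + g₂ x * h₂ x| ≤ D * (|h₁ x| + |h₂ x|) := by
          refine (abs_add_le _ _).trans ?_
          rw [abs_mul, abs_mul, mul_add]
          gcongr
        calc ρ x * |g₁ x * h₁ x + g₂ x * h₂ x| ≤ ρ x * (D * (|h₁ x| + |h₂ x|)) :=
              mul_le_mul_of_nonneg_left h3 (hρ0 x hx).le
          _ = _ := by ring) hac hcd hdb
    refine this.trans ?_
    rw [← hN, hK1]
    have h5 : d - c ≤ b - a := by linarith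
    have h6 : (0 + 2 * D * D * (1:ℝ)⁻¹) * (d - c) ≤ (0 + 2 * D * D * (1:ℝ)⁻¹) * (b - a) :=
      mul_le_mul_of_nonneg_left h5 (by simp; positivity)
    have h7 : 0 ≤ 2 * D * D * (b - a) * N := by positivity
    simp only [inv_one, zero_add, mul_one] at h6 ⊢
    nlinarith
  have gu := gen u₁ u₂ (fun x hx => ⟨by linarith [(hMu x hx).1], by linarith [(hMu x hx).2.1]⟩)
  have gv := gen v₁ v₂ (fun x hx => ⟨by linarith [(hMv x hx).1], by linarith [(hMv x hx).2.1]⟩)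
  have fin : ∀ w z P Q : ℝ, |w| ≤ D → |z| ≤ D → |P| ≤ K1 * (1 + N) → |Q| ≤ K1 * (1 + N) →
      |(-W⁻¹) * (w * P + z * Q)| ≤ |W|⁻¹ * (2 * D * K1) * (1 + N) := by
    intro w z P Q hw hz hP hQ
    rw [abs_mul, abs_neg, abs_inv, mul_assoc]
    refine mul_le_mul_of_nonneg_left ?_ (by positivity)
    have := dx_two_bound hw hz hD0 hP hQ
    linarith
  refine ⟨_, _, dx_green hW hρ cu1 cu2 cv1 cv2 ch1 ch2 hu hv hwr, ⟨?_, ?_⟩, ?_⟩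
  · simp only [intervalIntegral.integral_same, mul_zero, zero_add]
    linear_combination (-W⁻¹ * (∫ s in a..b, ρ s * (v₁ s * h₁ s + v₂ s * h₂ s))) * bu
  · simp only [intervalIntegral.integral_same, mul_zero, add_zero]
    linear_combination (-W⁻¹ * (∫ s in a..b, ρ s * (u₁ s * h₁ s + u₂ s * h₂ s))) * bv
  · intro x hx
    exact ⟨fin _ _ _ _ (by linarith [(hMv x hx).1]) (by linarith [(hMu x hx).1])
        (gu a x le_rfl hx.1 hx.2) (gv x b hx.1 hx.2 le_rfl),
      fin _ _ _ _ (by linarith [(hMv x hx).2.1]) (by linarith [(hMu x hx).2.1])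
        (gu a x le_rfl hx.1 hx.2) (gv x b hx.1 hx.2 le_rfl)⟩


theorem dx_equi {a b : ℝ} {p q t ρ y₁ y₂ h₁ h₂ : ℝ → ℝ} {M K δ : ℝ} (hM : 0 ≤ M)
    (hp : ContinuousOn p (Set.Icc a b))
    (hq : ContinuousOn q (Set.Icc a b)) (ht : ContinuousOn t (Set.Icc a b))
    (hρ : ContinuousOn ρ (Set.Icc a b))
    (hh1 : ContinuousOn h₁ (Set.Icc a b)) (hh2 : ContinuousOn h₂ (Set.Icc a b))
    (hρ0 : ∀ x ∈ Set.Icc a b, 0 < ρ x) (hρM : ∀ x ∈ Set.Icc a b, ρ x ≤ M)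
    (hb : ∀ x ∈ Set.Icc a b, |p x| ≤ M ∧ |q x| ≤ M ∧ |t x| ≤ M) (hδ : 0 < δ)
    (hy : DxL a b p q t y₁ y₂ (fun x => ρ x * h₁ x) (fun x => ρ x * h₂ x))
    (hyK : ∀ x ∈ Set.Icc a b, |y₁ x| ≤ K ∧ |y₂ x| ≤ K) {c d : ℝ}
    (hac : a ≤ c) (hcd : c ≤ d) (hdb : d ≤ b) :
    |y₁ d - y₁ c| ≤ (2 * M * K + 2 * M * δ⁻¹) * (d - c) +
      δ * (∫ x in a..b, ρ x * (h₁ x ^ 2 + h₂ x ^ 2)) ∧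
    |y₂ d - y₂ c| ≤ (2 * M * K + 2 * M * δ⁻¹) * (d - c) +
      δ * (∫ x in a..b, ρ x * (h₁ x ^ 2 + h₂ x ^ 2)) := by
  have c1 := hy.cont1
  have c2 := hy.cont2
  constructor
  · rw [← dx_ftc hac hcd hdb hy.1 (by fun_prop)]
    have := dx_int_bound (w := fun x => ρ x * h₂ x - t x * y₁ x - q x * y₂ x) (M := M)
      (C := 2 * M * K) (D := 1) (δ := δ) hρ hh1 hh2 (fun x hx => (hρ0 x hx).le) hρM
      zero_le_one hδ (fun x hx => by
        obtain ⟨hp', hq', ht'⟩ := hb x hx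
        have e1 := dx_two_bound ht' hq' hM (hyK x hx).1 (hyK x hx).2
        have e2 : |ρ x * h₂ x| = ρ x * |h₂ x| := by rw [abs_mul, abs_of_pos (hρ0 x hx)]
        have e3 : 0 ≤ ρ x * |h₁ x| := mul_nonneg (hρ0 x hx).le (abs_nonneg _)
        have e4 : |ρ x * h₂ x - t x * y₁ x - q x * y₂ x| ≤
            |ρ x * h₂ x| + |t x * y₁ x + q x * y₂ x| := by
          rw [sub_sub]; exact abs_sub _ _
        linarith) hac hcd hdb
    simpa using this
  · rw [← dx_ftc hac hcd hdb hy.2 (by fun_prop)]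
    have := dx_int_bound (w := fun x => t x * y₂ x + p x * y₁ x - ρ x * h₁ x) (M := M)
      (C := 2 * M * K) (D := 1) (δ := δ) hρ hh1 hh2 (fun x hx => (hρ0 x hx).le) hρM
      zero_le_one hδ (fun x hx => by
        obtain ⟨hp', hq', ht'⟩ := hb x hx
        have e1 := dx_two_bound ht' hp' hM (hyK x hx).2 (hyK x hx).1
        have e2 : |ρ x * h₁ x| = ρ x * |h₁ x| := by rw [abs_mul, abs_of_pos (hρ0 x hx)]
        have e3 : 0 ≤ ρ x * |h₂ x| := mul_nonneg (hρ0 x hx).le (abs_nonneg _)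
        have e4 : |t x * y₂ x + p x * y₁ x - ρ x * h₁ x| ≤
            |t x * y₂ x + p x * y₁ x| + |ρ x * h₁ x| := abs_sub _ _
        linarith) hac hcd hdb
    simpa using this

theorem dx_simple {a b : ℝ} {p q t ρ w₁ w₂ f g : ℝ → ℝ} {α s : ℝ}
    (hp : ContinuousOn p (Set.Icc a b))
    (hq : ContinuousOn q (Set.Icc a b)) (ht : ContinuousOn t (Set.Icc a b))
    (hρ : ContinuousOn ρ (Set.Icc a b))
    (hw : DxL a b p q t w₁ w₂ (fun x => ρ x * (s * w₁ x)) (fun x => ρ x * (s * w₂ x)))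
    (he : DxL a b p q t f g (fun x => ρ x * (s * f x)) (fun x => ρ x * (s * g x)))
    (hbw : w₁ a * Real.cos α + w₂ a * Real.sin α = 0)
    (hbe : f a * Real.cos α + g a * Real.sin α = 0) :
    ∃ c d : ℝ, (∀ x ∈ Set.Icc a b, c * w₁ x + d * f x = 0 ∧ c * w₂ x + d * g x = 0) ∧
      (d = 0 → ∀ x ∈ Set.Icc a b, w₁ x = 0 ∧ w₂ x = 0) := by
  have hsc := Real.sin_sq_add_cos_sq α
  have conv : ∀ y₁ y₂ : ℝ → ℝ,
      DxL a b p q t y₁ y₂ (fun x => ρ x * (s * y₁ x)) (fun x => ρ x * (s * y₂ x)) →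
      y₁ a = 0 → y₂ a = 0 → ∀ x ∈ Set.Icc a b, y₁ x = 0 ∧ y₂ x = 0 := by
    intro y₁ y₂ hy h1 h2
    refine dx_unique (p := fun x => p x - s * ρ x) (q := fun x => q x - s * ρ x) (t := t)
      (by fun_prop) (by fun_prop) ht ⟨fun x hx => ?_, fun x hx => ?_⟩ h1 h2
    · exact (hy.1 x hx).congr_deriv (by ring)
    · exact (hy.2 x hx).congr_deriv (by ring)
  refine ⟨f a * Real.sin α - g a * Real.cos α, -(w₁ a * Real.sin α - w₂ a * Real.cos α), ?_, ?_⟩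
  · refine conv _ _ ((hw.comb he _ _).congr (fun _ _ => rfl) (fun _ _ => rfl) (fun x hx => by ring)
      (fun x hx => by ring)) ?_ ?_
    · linear_combination Real.cos α * (dx_bc_det hbe hbw)
    · linear_combination Real.sin α * (dx_bc_det hbe hbw)
  · intro hd
    refine conv _ _ hw ?_ ?_
    · linear_combination (-w₁ a) * hsc + (-Real.sin α) * hd + Real.cos α * hbw
    · linear_combination (-w₂ a) * hsc + (Real.cos α) * hd + Real.sin α * hbw

theorem dx_arzela {a b : ℝ} (Y : ℕ → C(Set.Icc a b, ℝ × ℝ)) (K : ℝ) (hK : ∀ n x, ‖Y n x‖ ≤ K)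
    (hE : ∀ ε > 0, ∃ η > 0, ∀ n, ∀ x x' : Set.Icc a b, dist x x' < η → dist (Y n x) (Y n x') < ε) :
    ∃ (y : C(Set.Icc a b, ℝ × ℝ)) (φ : ℕ → ℕ), StrictMono φ ∧
      Tendsto (fun n => ‖Y (φ n) - y‖) atTop (𝓝 0) := by
  let G : ℕ → BoundedContinuousFunction (Set.Icc a b) (ℝ × ℝ) :=
    fun n => BoundedContinuousFunction.mkOfCompact (Y n)
  have hc : IsCompact (closure (Set.range G)) := by
    refine BoundedContinuousFunction.arzela_ascoli (Metric.closedBall 0 K)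
      (isCompact_closedBall _ _) _ ?_ ?_
    · rintro _ x ⟨n, rfl⟩
      rw [mem_closedBall_zero_iff]
      exact hK n x
    · intro x
      rw [Metric.equicontinuousAt_iff]
      intro ε hε
      obtain ⟨η, hη, h⟩ := hE ε hε
      refine ⟨η, hη, ?_⟩
      rintro x' hx' ⟨_, n, rfl⟩
      rw [dist_comm] at hx'
      exact h n x x' hx'
  obtain ⟨y, -, φ, hφ, hy⟩ := hc.tendsto_subseq (x := G)
    (fun n => subset_closure (Set.mem_range_self n))
  refine ⟨y.toContinuousMap, φ, hφ, ?_⟩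
  rw [tendsto_iff_dist_tendsto_zero] at hy
  refine squeeze_zero (fun n => norm_nonneg _) (fun n => ?_) hy
  rw [ContinuousMap.norm_le _ dist_nonneg]
  intro x
  rw [ContinuousMap.sub_apply, ← dist_eq_norm]
  exact BoundedContinuousFunction.dist_coe_le_dist (f := G (φ n)) (g := y) x


/-- Continuous pairs on `[a,b]`, to be equipped with the weighted `L²` inner product. -/
def DxX (a b : ℝ) : Type := C(Set.Icc a b, ℝ × ℝ)

noncomputable instance (a b : ℝ) : AddCommGroup (DxX a b) :=
  inferInstanceAs (AddCommGroup C(Set.Icc a b, ℝ × ℝ))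

noncomputable instance (a b : ℝ) : Module ℝ (DxX a b) :=
  inferInstanceAs (Module ℝ C(Set.Icc a b, ℝ × ℝ))

/-- The underlying continuous map. -/
def DxX.cm {a b : ℝ} (h : DxX a b) : C(Set.Icc a b, ℝ × ℝ) := h

/-- First component, extended to `ℝ`. -/
noncomputable def DxX.c1 {a b : ℝ} (hab : a ≤ b) (h : DxX a b) (x : ℝ) : ℝ :=
  (h.cm (Set.projIcc a b hab x)).1

/-- Second component, extended to `ℝ`. -/
noncomputable def DxX.c2 {a b : ℝ} (hab : a ≤ b) (h : DxX a b) (x : ℝ) : ℝ :=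
  (h.cm (Set.projIcc a b hab x)).2

namespace DxX
variable {a b : ℝ} (hab : a ≤ b)

theorem c1_cont (h : DxX a b) : Continuous (c1 hab h) :=
  continuous_fst.comp (h.cm.continuous.comp continuous_projIcc)
theorem c2_cont (h : DxX a b) : Continuous (c2 hab h) :=
  continuous_snd.comp (h.cm.continuous.comp continuous_projIcc)
theorem c1_add (h k : DxX a b) (x : ℝ) : c1 hab (h + k) x = c1 hab h x + c1 hab k x := rfl
theorem c2_add (h k : DxX a b) (x : ℝ) : c2 hab (h + k) x = c2 hab h x + c2 hab k x := rfl
theorem c1_smul (c : ℝ) (h : DxX a b) (x : ℝ) : c1 hab (c • h) x = c * c1 hab h x := rfl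
theorem c2_smul (c : ℝ) (h : DxX a b) (x : ℝ) : c2 hab (c • h) x = c * c2 hab h x := rfl
theorem c1_sub (h k : DxX a b) (x : ℝ) : c1 hab (h - k) x = c1 hab h x - c1 hab k x := rfl
theorem c2_sub (h k : DxX a b) (x : ℝ) : c2 hab (h - k) x = c2 hab h x - c2 hab k x := rfl
theorem c1_zero (x : ℝ) : c1 hab (0 : DxX a b) x = 0 := rfl
theorem c2_zero (x : ℝ) : c2 hab (0 : DxX a b) x = 0 := rfl

theorem c1_sum {ι : Type*} (s : Finset ι) (h : ι → DxX a b) (x : ℝ) :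
    c1 hab (∑ i ∈ s, h i) x = ∑ i ∈ s, c1 hab (h i) x := by
  classical
  induction s using Finset.induction_on with
  | empty => simp [c1_zero]
  | insert i s hi ih => rw [Finset.sum_insert hi, Finset.sum_insert hi, c1_add, ih]

theorem c2_sum {ι : Type*} (s : Finset ι) (h : ι → DxX a b) (x : ℝ) :
    c2 hab (∑ i ∈ s, h i) x = ∑ i ∈ s, c2 hab (h i) x := by
  classical
  induction s using Finset.induction_on with
  | empty => simp [c2_zero]
  | insert i s hi ih => rw [Finset.sum_insert hi, Finset.sum_insert hi, c2_add, ih]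

theorem ext' {h k : DxX a b} (h1 : ∀ x ∈ Set.Icc a b, c1 hab h x = c1 hab k x)
    (h2 : ∀ x ∈ Set.Icc a b, c2 hab h x = c2 hab k x) : h = k := by
  refine ContinuousMap.ext fun x => ?_
  have e1 := h1 x x.2
  have e2 := h2 x x.2
  simp only [c1, c2, Set.projIcc_val] at e1 e2
  exact Prod.ext e1 e2

/-- Build an element from a pair of functions continuous on `[a,b]`. -/
def mk (y₁ y₂ : ℝ → ℝ) (h1 : ContinuousOn y₁ (Set.Icc a b)) (h2 : ContinuousOn y₂ (Set.Icc a b)) :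
    DxX a b :=
  (⟨fun x => (y₁ x, y₂ x), (continuousOn_iff_continuous_domRestrict.mp h1).prodMk
    (continuousOn_iff_continuous_domRestrict.mp h2)⟩ : C(Set.Icc a b, ℝ × ℝ))

theorem c1_mk {y₁ y₂ : ℝ → ℝ} (h1 : ContinuousOn y₁ (Set.Icc a b))
    (h2 : ContinuousOn y₂ (Set.Icc a b)) {x : ℝ} (hx : x ∈ Set.Icc a b) :
    c1 hab (mk y₁ y₂ h1 h2) x = y₁ x := by
  change y₁ (Set.projIcc a b hab x) = y₁ x
  rw [Set.projIcc_of_mem hab hx]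

theorem c2_mk {y₁ y₂ : ℝ → ℝ} (h1 : ContinuousOn y₁ (Set.Icc a b))
    (h2 : ContinuousOn y₂ (Set.Icc a b)) {x : ℝ} (hx : x ∈ Set.Icc a b) :
    c2 hab (mk y₁ y₂ h1 h2) x = y₂ x := by
  change y₂ (Set.projIcc a b hab x) = y₂ x
  rw [Set.projIcc_of_mem hab hx]

/-- The weighted inner product. -/
noncomputable def ip (ρ : ℝ → ℝ) (h k : DxX a b) : ℝ :=
  ∫ x in a..b, ρ x * (c1 hab h x * c1 hab k x + c2 hab h x * c2 hab k x)

theorem ip_int {ρ : ℝ → ℝ} (hρ : Continuous ρ) (h k : DxX a b) : IntervalIntegrable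
    (fun x => ρ x * (c1 hab h x * c1 hab k x + c2 hab h x * c2 hab k x))
    MeasureTheory.volume a b := by
  have := c1_cont hab h
  have := c2_cont hab h
  have := c1_cont hab k
  have := c2_cont hab k
  exact Continuous.intervalIntegrable (by fun_prop) _ _

theorem ip_self_nonneg {ρ : ℝ → ℝ} (hρ0 : ∀ x ∈ Set.Icc a b, 0 < ρ x) (h : DxX a b) :
    0 ≤ ip hab ρ h h := by
  refine intervalIntegral.integral_nonneg hab fun x hx => ?_
  have := (hρ0 x hx).le
  exact mul_nonneg this (add_nonneg (mul_self_nonneg _) (mul_self_nonneg _))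

/-- The inner product core. -/
noncomputable def core (hab' : a < b) (ρ : ℝ → ℝ) (hρ : Continuous ρ)
    (hρ0 : ∀ x ∈ Set.Icc a b, 0 < ρ x) : InnerProductSpace.Core ℝ (DxX a b) where
  inner h k := ip hab'.le ρ h k
  conj_inner_symm h k := by
    simp only [conj_trivial, ip]
    congr 1; ext x; ring
  re_inner_nonneg h := by
    simpa using ip_self_nonneg hab'.le hρ0 h
  add_left h k l := by
    simp only [ip]
    rw [← intervalIntegral.integral_add (ip_int _ hρ _ _) (ip_int _ hρ _ _)]
    congr 1; ext x; rw [c1_add, c2_add]; ring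
  smul_left h k c := by
    simp only [ip, conj_trivial]
    rw [← intervalIntegral.integral_const_mul]
    congr 1; ext x; rw [c1_smul, c2_smul]; ring
  definite h h0 := by
    by_contra hne
    have hex : ∃ x ∈ Set.Icc a b, c1 hab'.le h x ≠ 0 ∨ c2 hab'.le h x ≠ 0 := by
      by_contra hcon
      push Not at hcon
      exact hne (ext' hab'.le (fun x hx => (hcon x hx).1) (fun x hx => (hcon x hx).2))
    obtain ⟨c, hc, hc0⟩ := hex
    have e1 := c1_cont hab'.le h
    have e2 := c2_cont hab'.le h
    have : 0 < ip hab'.le ρ h h := by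
      refine intervalIntegral.integral_pos hab' (Continuous.continuousOn (by fun_prop))
        (fun x hx => ?_) ⟨c, hc, ?_⟩
      · exact mul_nonneg (hρ0 x (Set.Ioc_subset_Icc_self hx)).le
          (add_nonneg (mul_self_nonneg _) (mul_self_nonneg _))
      · refine mul_pos (hρ0 c hc) ?_
        rcases hc0 with h1 | h1
        · exact add_pos_of_pos_of_nonneg (mul_self_pos.mpr h1) (mul_self_nonneg _)
        · exact add_pos_of_nonneg_of_pos (mul_self_nonneg _) (mul_self_pos.mpr h1)
    exact this.ne' h0

theorem ip_le {ρ : ℝ → ℝ} {M E : ℝ} (hρ : Continuous ρ)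
    (hρ0 : ∀ x ∈ Set.Icc a b, 0 < ρ x) (hρM : ∀ x ∈ Set.Icc a b, ρ x ≤ M) (h : DxX a b)
    (h1 : ∀ x ∈ Set.Icc a b, |c1 hab h x| ≤ E) (h2 : ∀ x ∈ Set.Icc a b, |c2 hab h x| ≤ E) :
    ip hab ρ h h ≤ 2 * M * (b - a) * E ^ 2 := by
  have : ip hab ρ h h ≤ ∫ _ in a..b, 2 * M * E ^ 2 := by
    refine intervalIntegral.integral_mono_on hab (ip_int hab hρ h h) intervalIntegrable_const
      fun x hx => ?_
    have e1 : c1 hab h x * c1 hab h x ≤ E ^ 2 := by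
      have := h1 x hx
      rw [← abs_mul_abs_self]; nlinarith [abs_nonneg (c1 hab h x)]
    have e2 : c2 hab h x * c2 hab h x ≤ E ^ 2 := by
      have := h2 x hx
      rw [← abs_mul_abs_self]; nlinarith [abs_nonneg (c2 hab h x)]
    have r0 := hρ0 x hx
    have rM := hρM x hx
    calc ρ x * (c1 hab h x * c1 hab h x + c2 hab h x * c2 hab h x)
        ≤ ρ x * (E ^ 2 + E ^ 2) := by gcongr
      _ ≤ M * (E ^ 2 + E ^ 2) := by gcongr
      _ = _ := by ring
  refine this.trans (le_of_eq ?_)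
  rw [intervalIntegral.integral_const, smul_eq_mul]; ring

end DxX


namespace DxX
variable {a b : ℝ}

/-- `y` solves the inhomogeneous boundary value problem with right-hand side `h`. -/
def Is (hab : a ≤ b) (p q t ρ : ℝ → ℝ) (α β : ℝ) (y h : DxX a b) : Prop :=
  DxL a b p q t (c1 hab y) (c2 hab y) (fun x => ρ x * c1 hab h x) (fun x => ρ x * c2 hab h x) ∧
    DiracBC a b α β (c1 hab y) (c2 hab y)

theorem Is.comb {hab : a ≤ b} {p q t ρ : ℝ → ℝ} {α β : ℝ} {y h z k : DxX a b}
    (hy : Is hab p q t ρ α β y h) (hz : Is hab p q t ρ α β z k) (c d : ℝ) :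
    Is hab p q t ρ α β (c • y + d • z) (c • h + d • k) := by
  refine ⟨(hy.1.comb hz.1 c d).congr (fun x _ => ?_) (fun x _ => ?_) (fun x _ => ?_)
    (fun x _ => ?_), ?_, ?_⟩
  · rw [c1_add, c1_smul, c1_smul]
  · rw [c2_add, c2_smul, c2_smul]
  · rw [c1_add, c1_smul, c1_smul]; ring
  · rw [c2_add, c2_smul, c2_smul]; ring
  · have e1 := hy.2.1
    have e2 := hz.2.1
    rw [c1_add, c1_smul, c1_smul, c2_add, c2_smul, c2_smul]
    linear_combination c * e1 + d * e2
  · have e1 := hy.2.2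
    have e2 := hz.2.2
    rw [c1_add, c1_smul, c1_smul, c2_add, c2_smul, c2_smul]
    linear_combination c * e1 + d * e2

theorem Is.mk {hab : a ≤ b} {p q t ρ : ℝ → ℝ} {α β : ℝ} {y₁ y₂ h₁ h₂ : ℝ → ℝ}
    (hy : DxL a b p q t y₁ y₂ (fun x => ρ x * h₁ x) (fun x => ρ x * h₂ x))
    (hbc : DiracBC a b α β y₁ y₂) (y h : DxX a b)
    (e1 : ∀ x ∈ Set.Icc a b, c1 hab y x = y₁ x) (e2 : ∀ x ∈ Set.Icc a b, c2 hab y x = y₂ x)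
    (e3 : ∀ x ∈ Set.Icc a b, c1 hab h x = h₁ x) (e4 : ∀ x ∈ Set.Icc a b, c2 hab h x = h₂ x) :
    Is hab p q t ρ α β y h := by
  have ha := Set.left_mem_Icc.mpr hab
  have hb := Set.right_mem_Icc.mpr hab
  refine ⟨hy.congr e1 e2 (fun x hx => by simp only [e3 x hx]) (fun x hx => by simp only [e4 x hx]),
    ?_, ?_⟩
  · rw [e1 a ha, e2 a ha]; exact hbc.1
  · rw [e1 b hb, e2 b hb]; exact hbc.2

theorem Is.unique {hab : a ≤ b} {p q t ρ : ℝ → ℝ} {α β : ℝ} {y h z : DxX a b}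
    (hz : ∀ y₁ y₂ : ℝ → ℝ, DxL a b p q t y₁ y₂ (fun _ => 0) (fun _ => 0) →
      DiracBC a b α β y₁ y₂ → ∀ x ∈ Set.Icc a b, y₁ x = 0 ∧ y₂ x = 0)
    (hy : Is hab p q t ρ α β y h) (hy' : Is hab p q t ρ α β z h) : y = z := by
  have h0 := hy.comb hy' 1 (-1)
  have := hz _ _ (h0.1.congr (fun _ _ => rfl) (fun _ _ => rfl)
    (fun x _ => by rw [c1_add, c1_smul, c1_smul]; ring)
    (fun x _ => by rw [c2_add, c2_smul, c2_smul]; ring)) h0.2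
  refine ext' hab (fun x hx => ?_) (fun x hx => ?_)
  · have := (this x hx).1
    rw [c1_add, c1_smul, c1_smul] at this; linarith
  · have := (this x hx).2
    rw [c2_add, c2_smul, c2_smul] at this; linarith

theorem Is.symm_ip (hab : a < b) {p q t ρ : ℝ → ℝ} {α β : ℝ} (hρ : Continuous ρ) {y h z k : DxX a b}
    (hy : Is hab.le p q t ρ α β y h) (hz : Is hab.le p q t ρ α β z k) :
    ip hab.le ρ y k = ip hab.le ρ h z := by
  have d1 := c1_cont hab.le h
  have d2 := c2_cont hab.le h
  have d3 := c1_cont hab.le k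
  have d4 := c2_cont hab.le k
  have := dx_lagrange hab hy.1 hz.1 (Continuous.continuousOn (by fun_prop))
    (Continuous.continuousOn (by fun_prop)) (Continuous.continuousOn (by fun_prop))
    (Continuous.continuousOn (by fun_prop)) hy.2 hz.2
  unfold ip
  calc _ = _ := by congr 1; ext x; ring
    _ = _ := this.symm
    _ = _ := by congr 1; ext x; ring

theorem exists_R (hab : a < b) {p q t ρ : ℝ → ℝ} (α β : ℝ)
    (hp : ContinuousOn p (Set.Icc a b))
    (hq : ContinuousOn q (Set.Icc a b)) (ht : ContinuousOn t (Set.Icc a b)) (hρ : Continuous ρ)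
    (hρ0 : ∀ x ∈ Set.Icc a b, 0 < ρ x)
    (hz : ∀ y₁ y₂ : ℝ → ℝ, DxL a b p q t y₁ y₂ (fun _ => 0) (fun _ => 0) →
      DiracBC a b α β y₁ y₂ → ∀ x ∈ Set.Icc a b, y₁ x = 0 ∧ y₂ x = 0) :
    ∃ (R : DxX a b →ₗ[ℝ] DxX a b) (K : ℝ), 0 ≤ K ∧ (∀ h, Is hab.le p q t ρ α β (R h) h) ∧
      ∀ h, ∀ x ∈ Set.Icc a b, |c1 hab.le (R h) x| ≤ K * (1 + ip hab.le ρ h h) ∧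
        |c2 hab.le (R h) x| ≤ K * (1 + ip hab.le ρ h h) := by
  obtain ⟨K, hK, hres⟩ := dx_resolvent hab α β hp hq ht hρ hρ0 hz
  have hex : ∀ h : DxX a b, ∃ y : DxX a b, Is hab.le p q t ρ α β y h ∧
      ∀ x ∈ Set.Icc a b, |c1 hab.le y x| ≤ K * (1 + ip hab.le ρ h h) ∧
        |c2 hab.le y x| ≤ K * (1 + ip hab.le ρ h h) := by
    intro h
    obtain ⟨y₁, y₂, hy, hbc, hyb⟩ := hres _ _ (c1_cont hab.le h) (c2_cont hab.le h)
    refine ⟨DxX.mk y₁ y₂ hy.cont1 hy.cont2, Is.mk hy hbc _ _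
      (fun x hx => c1_mk hab.le hy.cont1 hy.cont2 hx)
      (fun x hx => c2_mk hab.le hy.cont1 hy.cont2 hx) (fun _ _ => rfl) (fun _ _ => rfl), ?_⟩
    intro x hx
    rw [c1_mk hab.le hy.cont1 hy.cont2 hx, c2_mk hab.le hy.cont1 hy.cont2 hx]
    have := hyb x hx
    simpa only [ip, pow_two] using this
  choose R hR hRb using hex
  refine ⟨⟨⟨R, fun h k => ?_⟩, fun c h => ?_⟩, K, hK, hR, hRb⟩
  · have := (hR h).comb (hR k) 1 1
    simp only [one_smul] at this
    exact (hR (h + k)).unique hz this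
  · have := (hR h).comb (hR h) c 0
    simp only [zero_smul, add_zero] at this
    exact (hR (c • h)).unique hz this

theorem exists_sub (hab : a < b) {p q t ρ : ℝ → ℝ} {α β : ℝ}
    (hp : ContinuousOn p (Set.Icc a b))
    (hq : ContinuousOn q (Set.Icc a b)) (ht : ContinuousOn t (Set.Icc a b)) (hρ : Continuous ρ)
    (hρ0 : ∀ x ∈ Set.Icc a b, 0 < ρ x) {K B : ℝ} (Y h : ℕ → DxX a b)
    (hY : ∀ n, Is hab.le p q t ρ α β (Y n) (h n))
    (hYK : ∀ n, ∀ x ∈ Set.Icc a b, |c1 hab.le (Y n) x| ≤ K ∧ |c2 hab.le (Y n) x| ≤ K)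
    (hB : ∀ n, ip hab.le ρ (h n) (h n) ≤ B) :
    ∃ (y : DxX a b) (φ : ℕ → ℕ), StrictMono φ ∧ ∀ ε > 0, ∀ᶠ n in atTop, ∀ x ∈ Set.Icc a b,
      |c1 hab.le (Y (φ n) - y) x| ≤ ε ∧ |c2 hab.le (Y (φ n) - y) x| ≤ ε := by
  obtain ⟨M₁, hM₁, hb₁⟩ := dx_exists_bound hp hq ht
  obtain ⟨M₂, hM₂, hb₂⟩ := dx_exists_bound (hρ.continuousOn (s := Set.Icc a b)) hq ht
  set M := max M₁ M₂ with hMdef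
  have hM : 0 ≤ M := hM₁.trans (le_max_left _ _)
  have hb : ∀ x ∈ Set.Icc a b, |p x| ≤ M ∧ |q x| ≤ M ∧ |t x| ≤ M := fun x hx =>
    ⟨(hb₁ x hx).1.trans (le_max_left _ _), (hb₁ x hx).2.1.trans (le_max_left _ _),
      (hb₁ x hx).2.2.trans (le_max_left _ _)⟩
  have hρM : ∀ x ∈ Set.Icc a b, ρ x ≤ M := fun x hx =>
    (le_abs_self _).trans ((hb₂ x hx).1.trans (le_max_right _ _))
  have hB0 : 0 ≤ B := (ip_self_nonneg hab.le hρ0 (h 0)).trans (hB 0)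
  have hK0 : 0 ≤ K := (abs_nonneg _).trans (hYK 0 a (Set.left_mem_Icc.mpr hab.le)).1
  have hmod : ∀ ε > 0, ∃ η > 0, ∀ n, ∀ c d, a ≤ c → c ≤ d → d ≤ b → d - c < η →
      |c1 hab.le (Y n) d - c1 hab.le (Y n) c| < ε ∧
      |c2 hab.le (Y n) d - c2 hab.le (Y n) c| < ε := by
    intro ε hε
    set δ := ε / (2 * (B + 1)) with hδdef
    have hδ : 0 < δ := by positivity
    have hδB : δ * B < ε / 2 := by
      rw [hδdef, div_mul_eq_mul_div, div_lt_div_iff₀ (by positivity) (by positivity)]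
      nlinarith
    set Q := 2 * M * K + 2 * M * δ⁻¹ with hQ
    have hQ0 : 0 ≤ Q := by positivity
    refine ⟨ε / (2 * (Q + 1)), by positivity, fun n c d hac hcd hdb hlt => ?_⟩
    have hh := dx_equi hM hp hq ht hρ.continuousOn (c1_cont hab.le (h n)).continuousOn
      (c2_cont hab.le (h n)).continuousOn hρ0 hρM hb hδ (hY n).1 (hYK n) hac hcd hdb
    have hI : (∫ x in a..b, ρ x * (c1 hab.le (h n) x ^ 2 + c2 hab.le (h n) x ^ 2)) ≤ B := by
      have := hB n
      simpa only [ip, pow_two] using this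
    have h1 : Q * (d - c) ≤ ε / 2 := by
      have : Q * (d - c) ≤ Q * (ε / (2 * (Q + 1))) := by gcongr
      refine this.trans ?_
      rw [mul_div_assoc', div_le_div_iff₀ (by positivity) (by positivity)]
      nlinarith
    have h2 := mul_le_mul_of_nonneg_left hI hδ.le
    constructor
    · linarith [hh.1]
    · linarith [hh.2]
  have hc : ∀ (k : DxX a b) (x : Set.Icc a b), k.cm x = (c1 hab.le k x, c2 hab.le k x) := by
    intro k x
    simp only [c1, c2, Set.projIcc_val]
  obtain ⟨y, φ, hφ, hlim⟩ := dx_arzela (fun n => (Y n).cm) K (fun n x => by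
    rw [hc, Prod.norm_def]
    exact max_le (hYK n x x.2).1 (hYK n x x.2).2) (fun ε hε => by
    obtain ⟨η, hη, hm⟩ := hmod ε hε
    refine ⟨η, hη, fun n x x' hd => ?_⟩
    have hdd : |(x:ℝ) - x'| < η := hd
    rw [hc, hc, Prod.dist_eq, Real.dist_eq, Real.dist_eq]
    rcases le_total (x:ℝ) x' with hle | hle
    · rw [abs_sub_comm] at hdd
      have := hm n x x' x.2.1 hle x'.2.2 ((le_abs_self _).trans_lt hdd)
      rw [abs_sub_comm, abs_sub_comm (c2 hab.le (Y n) x)]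
      exact max_lt this.1 this.2
    · have := hm n x' x x'.2.1 hle x.2.2 ((le_abs_self _).trans_lt hdd)
      exact max_lt this.1 this.2)
  refine ⟨y, φ, hφ, fun ε hε => ?_⟩
  filter_upwards [hlim.eventually (gt_mem_nhds hε)] with n hn x hx
  have := (ContinuousMap.norm_coe_le_norm ((Y (φ n)).cm - y) ⟨x, hx⟩).trans hn.le
  rw [show ((Y (φ n)).cm - y) ⟨x, hx⟩ =
    (@HSub.hSub (DxX a b) (DxX a b) (DxX a b) _ (Y (φ n)) y).cm ⟨x, hx⟩ from rfl, hc, Prod.norm_def] at this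
  exact ⟨(le_max_left _ _).trans this, (le_max_right _ _).trans this⟩

end DxX


theorem dx_core {a b : ℝ} (hab : a < b) {p q t ρ : ℝ → ℝ} {α β : ℝ}
    (hp : ContinuousOn p (Set.Icc a b))
    (hq : ContinuousOn q (Set.Icc a b)) (ht : ContinuousOn t (Set.Icc a b)) (hρ : Continuous ρ)
    (hρ0 : ∀ x ∈ Set.Icc a b, 0 < ρ x)
    (hz : ∀ y₁ y₂ : ℝ → ℝ, DxL a b p q t y₁ y₂ (fun _ => 0) (fun _ => 0) →
      DiracBC a b α β y₁ y₂ → ∀ x ∈ Set.Icc a b, y₁ x = 0 ∧ y₂ x = 0)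
    (μ : ℤ → ℝ) (hμ0 : ∀ n, μ n ≠ 0) (f g : ℤ → ℝ → ℝ)
    (hfg : ∀ n, DxL a b p q t (f n) (g n) (fun x => ρ x * (μ n * f n x))
      (fun x => ρ x * (μ n * g n x)))
    (hbc : ∀ n, DiracBC a b α β (f n) (g n))
    (hcompl : ∀ (s : ℝ) (w₁ w₂ : ℝ → ℝ), DxL a b p q t w₁ w₂ (fun x => ρ x * (s * w₁ x))
      (fun x => ρ x * (s * w₂ x)) → DiracBC a b α β w₁ w₂ →
      (∃ x ∈ Set.Icc a b, w₁ x ≠ 0 ∨ w₂ x ≠ 0) → ∃ n, μ n = s)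
    (horth : ∀ m n : ℤ,
      (∫ x in a..b, ρ x * (f m x * f n x + g m x * g n x)) = if m = n then 1 else 0)
    (F₁ F₂ h₁ h₂ : ℝ → ℝ) (hh1 : ContinuousOn h₁ (Set.Icc a b)) (hh2 : ContinuousOn h₂ (Set.Icc a b))
    (hF : DxL a b p q t F₁ F₂ (fun x => ρ x * h₁ x) (fun x => ρ x * h₂ x))
    (hFbc : DiracBC a b α β F₁ F₂) (C : ℤ → ℝ)
    (hC : ∀ n, C n = ∫ x in a..b, ρ x * (f n x * F₁ x + g n x * F₂ x)) :
    ∀ x ∈ Set.Icc a b,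
      Tendsto (fun N : ℕ => F₁ x - ∑ n ∈ Finset.Icc (-(N : ℤ)) (N : ℤ), C n * f n x) atTop (𝓝 0) ∧
      Tendsto (fun N : ℕ => F₂ x - ∑ n ∈ Finset.Icc (-(N : ℤ)) (N : ℤ), C n * g n x) atTop (𝓝 0) := by
  obtain ⟨R, K, hK, hR, hRb⟩ := DxX.exists_R hab α β hp hq ht hρ hρ0 hz
  obtain ⟨M, hM, hρM'⟩ := dx_exists_bound (hρ.continuousOn (s := Set.Icc a b)) hq ht
  have hρM : ∀ x ∈ Set.Icc a b, ρ x ≤ M := fun x hx => (le_abs_self _).trans (hρM' x hx).1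
  let core := DxX.core hab ρ hρ hρ0
  letI : NormedAddCommGroup (DxX a b) := core.toNormedAddCommGroup
  letI : InnerProductSpace ℝ (DxX a b) := InnerProductSpace.ofCore core.toCore
  have hinner : ∀ h k : DxX a b, inner ℝ h k = DxX.ip hab.le ρ h k := fun _ _ => rfl
  have hnorm : ∀ h : DxX a b, ‖h‖ ^ 2 = DxX.ip hab.le ρ h h := fun h => by
    rw [← hinner, real_inner_self_eq_norm_sq]
  have hba : 0 < b - a := sub_pos.mpr hab
  -- boundedness
  have hbd : ∀ h : DxX a b, ‖h‖ ≤ 1 → ‖R h‖ ≤ Real.sqrt (2 * M * (b - a) * (K * 2) ^ 2) := by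
    intro h hh
    apply Real.le_sqrt_of_sq_le
    rw [hnorm]
    have h1 : DxX.ip hab.le ρ h h ≤ 1 := by
      rw [← hnorm]; exact pow_le_one₀ (norm_nonneg _) hh
    have h2 : K * (1 + DxX.ip hab.le ρ h h) ≤ K * 2 :=
      mul_le_mul_of_nonneg_left (by linarith) hK
    exact DxX.ip_le hab.le hρ hρ0 hρM _ (fun x hx => (hRb h x hx).1.trans h2)
      (fun x hx => (hRb h x hx).2.trans h2)
  set B := Real.sqrt (2 * M * (b - a) * (K * 2) ^ 2) with hB
  have hbd' : ∀ h : DxX a b, ‖R h‖ ≤ B * ‖h‖ := by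
    intro h
    by_cases h0 : h = 0
    · simp [h0]
    have hn : 0 < ‖h‖ := norm_pos_iff.mpr h0
    have := hbd (‖h‖⁻¹ • h) (by rw [norm_smul, norm_inv, norm_norm, inv_mul_cancel₀ hn.ne'])
    rw [map_smul, norm_smul, norm_inv, norm_norm, inv_mul_le_iff₀ hn] at this
    linarith
  let T : DxX a b →L[ℝ] DxX a b := R.mkContinuous B hbd'
  have hT : ∀ h, T h = R h := fun h => rfl
  let ev : (Set.Icc a b) × Bool → DxX a b → ℝ := fun i h =>
    if i.2 then DxX.c1 hab.le h i.1 else DxX.c2 hab.le h i.1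
  have hE : ∀ n, ∃ e : DxX a b, (∀ x ∈ Set.Icc a b, DxX.c1 hab.le e x = f n x) ∧
      (∀ x ∈ Set.Icc a b, DxX.c2 hab.le e x = g n x) := fun n =>
    ⟨DxX.mk (f n) (g n) (hfg n).cont1 (hfg n).cont2, fun x hx => DxX.c1_mk _ _ _ hx,
      fun x hx => DxX.c2_mk _ _ _ hx⟩
  choose e he1 he2 using hE
  have heIs : ∀ n, DxX.Is hab.le p q t ρ α β (e n) (μ n • e n) := fun n =>
    DxX.Is.mk (hfg n) (hbc n) _ _ (he1 n) (he2 n)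
      (fun x hx => by rw [DxX.c1_smul, he1 n x hx]) (fun x hx => by rw [DxX.c2_smul, he2 n x hx])
  have heR' : ∀ n, R (μ n • e n) = e n := fun n => (hR _).unique hz (heIs n)
  have heR : ∀ n, T (e n) = (μ n)⁻¹ • e n := by
    intro n
    rw [hT]
    conv_rhs => rw [← heR' n, map_smul, smul_smul, inv_mul_cancel₀ (hμ0 n), one_smul]
  have heo : Orthonormal ℝ e := by
    rw [orthonormal_iff_ite]
    intro m n
    rw [hinner, ← horth m n]
    refine intervalIntegral.integral_congr fun x hx => ?_
    rw [Set.uIcc_of_le hab.le] at hx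
    simp only [he1 m x hx, he2 m x hx, he1 n x hx, he2 n x hx]
  have hsymm : ∀ h k, inner ℝ (T h) k = inner ℝ h (T k) := fun h k =>
    DxX.Is.symm_ip hab hρ (hR h) (hR k)
  have hcomp : ∀ h : ℕ → DxX a b, (∃ M, ∀ n, ‖h n‖ ≤ M) → ∃ (y : DxX a b) (φ : ℕ → ℕ),
      StrictMono φ ∧ Tendsto (fun n => T (h (φ n))) atTop (𝓝 y) ∧
      ∀ i, Tendsto (fun n => ev i (T (h (φ n)))) atTop (𝓝 (ev i y)) := by
    rintro h ⟨Q, hQ⟩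
    have hip : ∀ n, DxX.ip hab.le ρ (h n) (h n) ≤ Q ^ 2 := fun n => by
      rw [← hnorm]; exact pow_le_pow_left₀ (norm_nonneg _) (hQ n) 2
    have hle : ∀ n, K * (1 + DxX.ip hab.le ρ (h n) (h n)) ≤ K * (1 + Q ^ 2) := fun n =>
      mul_le_mul_of_nonneg_left (by linarith [hip n]) hK
    obtain ⟨y, φ, hφ, hlim⟩ := DxX.exists_sub hab hp hq ht hρ hρ0 (K := K * (1 + Q ^ 2))
      (B := Q ^ 2) (fun n => R (h n)) h (fun n => hR _)
      (fun n x hx => ⟨(hRb (h n) x hx).1.trans (hle n), (hRb (h n) x hx).2.trans (hle n)⟩) hip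
    refine ⟨y, φ, hφ, ?_, ?_⟩
    · rw [tendsto_iff_norm_sub_tendsto_zero]
      rw [Metric.tendsto_nhds]
      intro ε hε
      have hpos : 0 < 2 * M * (b - a) + 1 := by positivity
      filter_upwards [hlim (ε / (2 * M * (b - a) + 1) / 2 ⊓ ε / 2) (by positivity)] with n hn
      set E := ε / (2 * M * (b - a) + 1) / 2 ⊓ ε / 2 with hEdef
      have hEpos : 0 < E := by positivity
      have h1 := DxX.ip_le hab.le hρ hρ0 hρM (R (h (φ n)) - y) (fun x hx => (hn x hx).1)
        (fun x hx => (hn x hx).2)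
      rw [← hnorm] at h1
      have hE1 : E * (2 * M * (b - a) + 1) ≤ ε / 2 := by
        have : E ≤ ε / (2 * M * (b - a) + 1) / 2 := inf_le_left
        calc E * (2 * M * (b - a) + 1) ≤ (ε / (2 * M * (b - a) + 1) / 2) * (2 * M * (b - a) + 1) := by
              gcongr
          _ = ε / 2 := by field_simp
      have hE2 : E ≤ ε / 2 := inf_le_right
      have h2 : ‖R (h (φ n)) - y‖ ^ 2 < ε ^ 2 := by
        nlinarith
      have h3 := lt_of_pow_lt_pow_left₀ 2 hε.le h2
      simpa [hT] using h3
    · rintro ⟨x, s⟩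
      rw [Metric.tendsto_nhds]
      intro ε hε
      filter_upwards [hlim (ε / 2) (by positivity)] with n hn
      have := hn x x.2
      rw [DxX.c1_sub, DxX.c2_sub] at this
      rw [Real.dist_eq]
      cases s
      · simp only [ev, hT]
        exact this.2.trans_lt (by linarith)
      · simp only [ev, hT]
        exact this.1.trans_lt (by linarith)
  have hno : ∀ (s : ℝ) (w : DxX a b), s ≠ 0 → (∀ n, inner ℝ (e n) w = 0) → T w = s • w → w = 0 := by
    intro s w hs hperp hw
    by_contra hne
    have hw' : R (s⁻¹ • w) = w := by
      rw [map_smul, ← hT, hw, smul_smul, inv_mul_cancel₀ hs, one_smul]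
    have hIs := hR (s⁻¹ • w)
    rw [hw'] at hIs
    have hex : ∃ x ∈ Set.Icc a b, DxX.c1 hab.le w x ≠ 0 ∨ DxX.c2 hab.le w x ≠ 0 := by
      by_contra hcon
      push Not at hcon
      exact hne (DxX.ext' hab.le (fun x hx => (hcon x hx).1) (fun x hx => (hcon x hx).2))
    obtain ⟨n, hn⟩ := hcompl s⁻¹ _ _ hIs.1 hIs.2 hex
    have hf := (heIs n)
    rw [hn] at hf
    obtain ⟨c, d, hcd, hd⟩ := dx_simple hp hq ht hρ.continuousOn hIs.1 hf.1 hIs.2.1 hf.2.1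
    have hzero : c • w + d • e n = 0 := DxX.ext' hab.le
      (fun x hx => by rw [DxX.c1_add, DxX.c1_smul, DxX.c1_smul, (hcd x hx).1, DxX.c1_zero])
      (fun x hx => by rw [DxX.c2_add, DxX.c2_smul, DxX.c2_smul, (hcd x hx).2, DxX.c2_zero])
    have hi : inner ℝ (e n) (c • w + d • e n) = 0 := by rw [hzero, inner_zero_right]
    rw [inner_add_right, inner_smul_right, inner_smul_right, hperp n, real_inner_self_eq_norm_sq,
      heo.1 n] at hi
    have hd0 : d = 0 := by linarith
    obtain ⟨x, hx, hx0⟩ := hex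
    have := hd hd0 x hx
    tauto
  -- the right-hand side
  have hFX := DxX.Is.mk (hab := hab.le) hF hFbc (DxX.mk F₁ F₂ hF.cont1 hF.cont2) (DxX.mk h₁ h₂ hh1 hh2)
    (fun x hx => DxX.c1_mk _ _ _ hx) (fun x hx => DxX.c2_mk _ _ _ hx)
    (fun x hx => DxX.c1_mk _ _ _ hx) (fun x hx => DxX.c2_mk _ _ _ hx)
  set FX : DxX a b := DxX.mk F₁ F₂ hF.cont1 hF.cont2 with hFXdef
  set h : DxX a b := DxX.mk h₁ h₂ hh1 hh2 with hdef
  have hRh : R h = FX := (hR h).unique hz hFX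
  have hCe : ∀ n, inner ℝ (e n) h = μ n * C n := by
    intro n
    have h1 : inner ℝ (e n) FX = C n := by
      rw [hinner, hC]
      refine intervalIntegral.integral_congr fun x hx => ?_
      rw [Set.uIcc_of_le hab.le] at hx
      simp only [he1 n x hx, he2 n x hx, hFXdef, DxX.c1_mk hab.le hF.cont1 hF.cont2 hx,
        DxX.c2_mk hab.le hF.cont1 hF.cont2 hx]
    have h2 := hsymm (μ n • e n) h
    rw [hT, hT, heR', hRh, real_inner_smul_left, h1] at h2
    exact h2
  have hTs : ∀ N : ℕ, T (h - ∑ n ∈ Finset.Icc (-(N:ℤ)) N, (inner ℝ (e n) h) • e n) =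
      FX - ∑ n ∈ Finset.Icc (-(N:ℤ)) N, C n • e n := by
    intro N
    rw [map_sub, map_sum, hT, hRh]
    congr 1
    refine Finset.sum_congr rfl fun n _ => ?_
    rw [map_smul, heR, smul_smul, hCe]
    congr 1
    have := hμ0 n
    field_simp
  intro x hx
  constructor
  · have := dx_abstract T ev (fun i => by simp [ev, DxX.c1_zero, DxX.c2_zero]) hsymm hcomp e heo
      (fun n => (μ n)⁻¹) heR hno h (⟨x, hx⟩, true)
    refine this.congr fun N => ?_
    rw [hTs]
    simp only [ev, if_true]
    rw [DxX.c1_sub, DxX.c1_sum, hFXdef, DxX.c1_mk hab.le hF.cont1 hF.cont2 hx]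
    congr 1
    refine Finset.sum_congr rfl fun n _ => ?_
    rw [DxX.c1_smul, he1 n x hx]
  · have := dx_abstract T ev (fun i => by simp [ev, DxX.c1_zero, DxX.c2_zero]) hsymm hcomp e heo
      (fun n => (μ n)⁻¹) heR hno h (⟨x, hx⟩, false)
    refine this.congr fun N => ?_
    rw [hTs]
    simp only [ev, Bool.false_eq_true, if_false]
    rw [DxX.c2_sub, DxX.c2_sum, hFXdef, DxX.c2_mk hab.le hF.cont1 hF.cont2 hx]
    congr 1
    refine Finset.sum_congr rfl fun n _ => ?_
    rw [DxX.c2_smul, he2 n x hx]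

theorem dx_sys_to_L {a b : ℝ} {p q t ρ r f g : ℝ → ℝ} {l z : ℝ}
    (hr : ∀ x ∈ Set.Icc a b, r x = ρ x) (h : SatisfiesDiracSystem a b p q t ρ l f g) :
    DxL a b (fun x => p x - z * r x) (fun x => q x - z * r x) t f g
      (fun x => r x * ((l - z) * f x)) (fun x => r x * ((l - z) * g x)) := by
  obtain ⟨f', g', hf, hg, -, -, e1, e2⟩ := h
  refine ⟨fun x hx => (hf x hx).congr_deriv ?_, fun x hx => (hg x hx).congr_deriv ?_⟩
  · have := e2 x hx
    simp only [hr x hx]; linarith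
  · have := e1 x hx
    simp only [hr x hx]; linarith

theorem dx_L_to_sys {a b : ℝ} {p q t ρ r f g : ℝ → ℝ} {l z : ℝ}
    (hp : ContinuousOn p (Set.Icc a b)) (hq : ContinuousOn q (Set.Icc a b))
    (ht : ContinuousOn t (Set.Icc a b)) (hρ : ContinuousOn ρ (Set.Icc a b))
    (hr : ∀ x ∈ Set.Icc a b, r x = ρ x)
    (h : DxL a b (fun x => p x - z * r x) (fun x => q x - z * r x) t f g
      (fun x => r x * (l * f x)) (fun x => r x * (l * g x))) :
    SatisfiesDiracSystem a b p q t ρ (l + z) f g := by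
  have cf := h.cont1
  have cg := h.cont2
  refine ⟨fun x => -(t x * f x) - (q x - (l + z) * ρ x) * g x,
    fun x => t x * g x + (p x - (l + z) * ρ x) * f x,
    fun x hx => (h.1 x hx).congr_deriv ?_, fun x hx => (h.2 x hx).congr_deriv ?_, ?_, ?_,
    fun x _ => by ring, fun x _ => by ring⟩
  · simp only [hr x hx]; ring
  · simp only [hr x hx]; ring
  · fun_prop
  · fun_prop

end DxHelpers

/-- The eigenfunction expansion of `F` converges to `F` on the whole closed
interval `[a,b]` if and only if `F` satisfies the same boundary conditions as
the basis functions. -/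
theorem dirac_expansion_converges_on_closed_iff_bc
    (a b : ℝ) (hab : a < b)
    (p q t ρ : ℝ → ℝ)
    (hp : ContDiffOn ℝ 1 p (Set.Icc a b)) (hq : ContDiffOn ℝ 1 q (Set.Icc a b))
    (ht : ContDiffOn ℝ 1 t (Set.Icc a b)) (hρ : ContDiffOn ℝ 1 ρ (Set.Icc a b))
    (hρpos : ∀ x ∈ Set.Icc a b, 0 < ρ x)
    (α β : ℝ) (hα : α ∈ Set.Ico 0 (2 * Real.pi)) (hβ : β ∈ Set.Ico 0 (2 * Real.pi))
    -- the listing of all eigenvalues with eigenfunctions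
    (lam : ℤ → ℝ) (f g : ℤ → ℝ → ℝ)
    (heig : ∀ n : ℤ, SatisfiesDiracSystem a b p q t ρ (lam n) (f n) (g n) ∧
      DiracBC a b α β (f n) (g n))
    (hord : ∀ n : ℤ, lam n ≤ lam (n + 1))
    (hgrow : Filter.Tendsto (fun n : ℤ => |lam n|) Filter.cofinite Filter.atTop)
    (hcomplete : ∀ μ : ℝ, IsDiracEigenvalue a b p q t ρ α β μ → ∃ n, lam n = μ)
    (horth : ∀ m n : ℤ,
      (∫ x in a..b, ρ x * (f m x * f n x + g m x * g n x)) = if m = n then 1 else 0)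
    -- the expanded function and its expansion coefficients
    (F₁ F₂ : ℝ → ℝ)
    (hF₁ : ContDiffOn ℝ 1 F₁ (Set.Icc a b)) (hF₂ : ContDiffOn ℝ 1 F₂ (Set.Icc a b))
    (C : ℤ → ℝ)
    (hC : ∀ n, C n = ∫ x in a..b, ρ x * (f n x * F₁ x + g n x * F₂ x)) :
    (∀ x ∈ Set.Icc a b,
      Filter.Tendsto
        (fun N : ℕ =>
          ((∑ n ∈ Finset.Icc (-(N : ℤ)) (N : ℤ), C n * f n x),
           (∑ n ∈ Finset.Icc (-(N : ℤ)) (N : ℤ), C n * g n x)))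
        Filter.atTop (nhds (F₁ x, F₂ x))) ↔
    (F₁ a * Real.cos α + F₂ a * Real.sin α = 0 ∧
     F₁ b * Real.cos β + F₂ b * Real.sin β = 0) := by
  have ha := Set.left_mem_Icc.mpr hab.le
  have hb := Set.right_mem_Icc.mpr hab.le
  constructor
  · intro hconv
    have key : ∀ x ∈ Set.Icc a b, ∀ θ : ℝ,
        (∀ n, f n x * Real.cos θ + g n x * Real.sin θ = 0) →
        F₁ x * Real.cos θ + F₂ x * Real.sin θ = 0 := by
      intro x hx θ hθ
      have h1 := (continuous_fst.tendsto _).comp (hconv x hx)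
      have h2 := (continuous_snd.tendsto _).comp (hconv x hx)
      have h3 := (h1.mul_const (Real.cos θ)).add (h2.mul_const (Real.sin θ))
      refine tendsto_nhds_unique h3 (Filter.Tendsto.congr (fun N => ?_) tendsto_const_nhds)
      simp only [Function.comp]
      rw [Finset.sum_mul, Finset.sum_mul, ← Finset.sum_add_distrib]
      symm
      refine Finset.sum_eq_zero fun n _ => ?_
      linear_combination C n * hθ n
    exact ⟨key a ha α fun n => (heig n).2.1, key b hb β fun n => (heig n).2.2⟩
  · intro hFbc
    obtain ⟨z, hz⟩ : ∃ z : ℝ, z ∉ Set.range lam := by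
      by_contra hcon
      push Not at hcon
      have : (Set.range lam) = Set.univ := Set.eq_univ_of_forall hcon
      have h1 := Set.countable_range lam
      rw [this] at h1
      exact Cardinal.not_countable_real h1
    have hpc := hp.continuousOn
    have hqc := hq.continuousOn
    have htc := ht.continuousOn
    have hρc := hρ.continuousOn
    have hF₁c := hF₁.continuousOn
    have hF₂c := hF₂.continuousOn
    set r : ℝ → ℝ := Set.IccExtend hab.le ((Set.Icc a b).domRestrict ρ) with hrdef
    have hrc : Continuous r := Continuous.Icc_extend' (continuousOn_iff_continuous_domRestrict.mp hρc)
    have hr : ∀ x ∈ Set.Icc a b, r x = ρ x := fun x hx => by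
      rw [hrdef, Set.IccExtend_of_mem _ _ hx]; rfl
    have hcompl : ∀ (s : ℝ) (w₁ w₂ : ℝ → ℝ), DxL a b (fun x => p x - z * r x)
        (fun x => q x - z * r x) t w₁ w₂ (fun x => r x * (s * w₁ x))
        (fun x => r x * (s * w₂ x)) → DiracBC a b α β w₁ w₂ →
        (∃ x ∈ Set.Icc a b, w₁ x ≠ 0 ∨ w₂ x ≠ 0) → ∃ n, lam n - z = s := by
      intro s w₁ w₂ hw hbc hne
      obtain ⟨n, hn⟩ := hcomplete (s + z)
        ⟨w₁, w₂, dx_L_to_sys hpc hqc htc hρc hr hw, hne, hbc⟩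
      exact ⟨n, by rw [hn]; ring⟩
    have hz0 : ∀ y₁ y₂ : ℝ → ℝ, DxL a b (fun x => p x - z * r x) (fun x => q x - z * r x) t y₁ y₂
        (fun _ => 0) (fun _ => 0) →
        DiracBC a b α β y₁ y₂ → ∀ x ∈ Set.Icc a b, y₁ x = 0 ∧ y₂ x = 0 := by
      intro y₁ y₂ hy hbc
      by_contra hcon
      push Not at hcon
      obtain ⟨x, hx, hx0⟩ := hcon
      obtain ⟨n, hn⟩ := hcompl 0 y₁ y₂ (hy.congr (fun _ _ => rfl) (fun _ _ => rfl)
        (fun x _ => by ring) (fun x _ => by ring)) hbc ⟨x, hx, by tauto⟩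
      exact hz ⟨n, by linarith⟩
    have hintg : ∀ u : ℝ → ℝ, ∫ x in a..b, r x * u x = ∫ x in a..b, ρ x * u x := fun u =>
      intervalIntegral.integral_congr fun x hx => by
        rw [Set.uIcc_of_le hab.le] at hx
        simp only [hr x hx]
    have hud := uniqueDiffOn_Icc hab
    have hd1 : ∀ x ∈ Set.Icc a b,
        HasDerivWithinAt F₁ (derivWithin F₁ (Set.Icc a b) x) (Set.Icc a b) x := fun x hx =>
      ((hF₁.differentiableOn one_ne_zero) x hx).hasDerivWithinAt
    have hd2 : ∀ x ∈ Set.Icc a b,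
        HasDerivWithinAt F₂ (derivWithin F₂ (Set.Icc a b) x) (Set.Icc a b) x := fun x hx =>
      ((hF₂.differentiableOn one_ne_zero) x hx).hasDerivWithinAt
    have hc1 := hF₁.continuousOn_derivWithin hud le_rfl
    have hc2 := hF₂.continuousOn_derivWithin hud le_rfl
    have hrr := hrc.continuousOn (s := Set.Icc a b)
    have hr0 : ∀ x ∈ Set.Icc a b, 0 < r x := fun x hx => by rw [hr x hx]; exact hρpos x hx
    have hri : ContinuousOn (fun x => (r x)⁻¹) (Set.Icc a b) := hrr.inv₀ fun x hx => (hr0 x hx).ne'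
    have main := dx_core hab (α := α) (β := β) (p := fun x => p x - z * r x)
      (q := fun x => q x - z * r x) (by fun_prop) (by fun_prop) htc hrc hr0 hz0
      (fun n => lam n - z) (fun n h0 => hz ⟨n, by linarith⟩) f g
      (fun n => dx_sys_to_L hr (heig n).1) (fun n => (heig n).2) hcompl
      (fun m n => by rw [hintg, horth]) F₁ F₂
      (fun x => (r x)⁻¹ * (-derivWithin F₂ (Set.Icc a b) x + t x * F₂ x + (p x - z * r x) * F₁ x))
      (fun x => (r x)⁻¹ * (derivWithin F₁ (Set.Icc a b) x + t x * F₁ x + (q x - z * r x) * F₂ x))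
      (by fun_prop) (by fun_prop)
      ⟨fun x hx => (hd1 x hx).congr_deriv (by
          beta_reduce; rw [mul_inv_cancel_left₀ (hr0 x hx).ne']; ring), fun x hx => (hd2 x hx).congr_deriv (by
          beta_reduce; rw [mul_inv_cancel_left₀ (hr0 x hx).ne']; ring)⟩
      hFbc C (fun n => by rw [hintg, hC])
    intro x hx
    obtain ⟨m1, m2⟩ := main x hx
    have n1 := m1.const_sub (F₁ x)
    have n2 := m2.const_sub (F₂ x)
    simp only [sub_sub_cancel, sub_zero] at n1 n2
    exact n1.prodMk_nhds n2
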